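/- arXiv:1601.05595 — 12 statements merged into one kernel-verified Lean document; each statement's English description precedes it below -/
import Mathlib

section
/- Let C be a q-ary (n,k,r) LRC with all symbol locality, where k ≥ 1 and r ≥ 1. Then there exist a natural number l and vectors h_1,…,h_l in the dual code C⊥ that are linearly independent over F_q, each of Hamming weight at most r+1, whose supports together cover all of {1,…,n}; moreover such a family can be chosen with l ≤ n − k (and necessarily n ≤ l(r+1)). -/
/-- Coordinate `i` of the linear code `C` has locality `r`. -/
def HasLocality {F ι : Type*} [Field F] [Fintype ι]
    (C : Submodule F (ι → F)) (i : ι) (r : ℕ) : Prop :=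
  ∃ R : Finset ι, i ∉ R ∧ R.card ≤ r ∧
    ∀ c ∈ C, ∀ c' ∈ C, (∀ j ∈ R, c j = c' j) → c i = c' i

theorem exists_dual_word {F : Type*} [Field F] [DecidableEq F] {n r : ℕ}
    (C : Submodule F (Fin n → F)) (i : Fin n) (hi : HasLocality C i r) :
    ∃ h : Fin n → F, (∀ c ∈ C, ∑ j, c j * h j = 0) ∧ hammingNorm h ≤ r + 1 ∧ h i ≠ 0 := by
  obtain ⟨R, hiR, hcard, hR⟩ := hi
  have key : (LinearMap.proj i : (Fin n → F) →ₗ[F] F).domRestrict C ∈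
      Submodule.span F (Set.range fun j : R =>
        (LinearMap.proj (j : Fin n) : (Fin n → F) →ₗ[F] F).domRestrict C) := by
    apply mem_span_of_iInf_ker_le_ker
    intro c hc
    simp only [Submodule.mem_iInf, LinearMap.mem_ker] at hc ⊢
    have := hR c c.2 0 C.zero_mem (fun j hj => by simpa using hc ⟨j, hj⟩)
    simpa using this
  rw [Submodule.mem_span_range_iff_exists_fun] at key
  obtain ⟨a, ha⟩ := key
  refine ⟨fun j => if j = i then -1 else if hj : j ∈ R then a ⟨j, hj⟩ else 0, ?_, ?_, ?_⟩
  · intro c hc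
    have h1 := LinearMap.congr_fun ha ⟨c, hc⟩
    simp only [LinearMap.sum_apply, LinearMap.smul_apply, LinearMap.domRestrict_apply,
      LinearMap.proj_apply, smul_eq_mul] at h1
    have h2 : ∀ j, c j * (if j = i then -1 else if hj : j ∈ R then a ⟨j, hj⟩ else 0)
        = (if j = i then - c j else 0) + (if hj : j ∈ R then a ⟨j, hj⟩ * c j else 0) := by
      intro j
      by_cases hji : j = i
      · subst hji; simp [hiR]
      · by_cases hj : j ∈ R <;> simp [hji, hj, mul_comm]
    rw [Finset.sum_congr rfl (fun j _ => h2 j), Finset.sum_add_distrib]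
    have h3 : ∑ j, (if hj : j ∈ R then a ⟨j, hj⟩ * c j else 0) = c i := by
      rw [← h1, ← Finset.sum_subset (Finset.subset_univ R)
        (fun j _ hj => by simp [hj]), ← Finset.sum_coe_sort R]
      exact Finset.sum_congr rfl (fun j _ => by simp)
    rw [h3]; simp
  · refine le_trans (Finset.card_le_card (t := insert i R) ?_)
      ((Finset.card_insert_le _ _).trans (by omega))
    intro j hj
    simp only [Finset.mem_filter] at hj
    by_contra hc
    simp only [Finset.mem_insert, not_or] at hc
    exact hj.2 (by simp [hc.1, hc.2])
  · simp

/-- For an `(n,k,r)` LRC with all symbol locality there exist `l ≤ n - k` linearly independent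
dual codewords of Hamming weight at most `r+1` whose supports cover all coordinates;
necessarily `n ≤ l(r+1)`. -/
theorem stmt_1 {F : Type*} [Field F] [Fintype F] [DecidableEq F]
    {n k r : ℕ} (hk : 1 ≤ k) (hr : 1 ≤ r)
    (C : Submodule F (Fin n → F)) (hCk : Module.finrank F C = k)
    (hloc : ∀ i : Fin n, HasLocality C i r) :
    ∃ (l : ℕ) (h : Fin l → Fin n → F),
      (∀ a : Fin l, ∀ c ∈ C, ∑ j, c j * h a j = 0) ∧
      LinearIndependent F h ∧
      (∀ a : Fin l, hammingNorm (h a) ≤ r + 1) ∧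
      (∀ i : Fin n, ∃ a : Fin l, h a i ≠ 0) ∧
      l ≤ n - k ∧ n ≤ l * (r + 1) := by
  choose g hg1 hg2 hg3 using fun i => exists_dual_word C i (hloc i)
  obtain ⟨b, hb, hspan, hli⟩ := exists_linearIndependent F (Set.range g)
  have hfin : Finite b := (Set.finite_range g).subset hb
  let e := (Finite.equivFin b).symm
  have hmem : ∀ a, ∃ i, g i = (e a : Fin n → F) := fun a => hb (e a).2
  have hdual : ∀ a, ∀ c ∈ C, ∑ j, c j * (e a : Fin n → F) j = 0 := by
    intro a; obtain ⟨i, hi⟩ := hmem a; rw [← hi]; exact hg1 i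
  have hwt : ∀ a, hammingNorm (e a : Fin n → F) ≤ r + 1 := by
    intro a; obtain ⟨i, hi⟩ := hmem a; rw [← hi]; exact hg2 i
  have hli' : LinearIndependent F (fun a => (e a : Fin n → F)) := hli.comp e e.injective
  have hcov : ∀ i : Fin n, ∃ a, (e a : Fin n → F) i ≠ 0 := by
    intro i
    by_contra! hcon
    apply hg3 i
    have h1 : g i ∈ Submodule.span F b := by
      rw [hspan]; exact Submodule.subset_span ⟨i, rfl⟩
    have h2 : Submodule.span F b ≤ LinearMap.ker (LinearMap.proj i : (Fin n → F) →ₗ[F] F) := by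
      rw [Submodule.span_le]
      intro x hx
      have := hcon (e.symm ⟨x, hx⟩)
      rw [Equiv.apply_symm_apply] at this
      exact this
    simpa using h2 h1
  refine ⟨Nat.card b, fun a => (e a : Fin n → F), hdual, hli', hwt, hcov, ?_, ?_⟩
  · have h1 : LinearIndependent F (fun a => dotProductEquiv F (Fin n) (e a : Fin n → F)) :=
      hli'.map' (dotProductEquiv F (Fin n)).toLinearMap (LinearEquiv.ker _)
    have h2 : ∀ a, dotProductEquiv F (Fin n) (e a : Fin n → F) ∈ C.dualAnnihilator := by
      intro a
      rw [Submodule.mem_dualAnnihilator]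
      intro c hc
      have := hdual a c hc
      simpa [dotProduct, mul_comm] using this
    have h3 : LinearIndependent F (fun a => (⟨_, h2 a⟩ : C.dualAnnihilator)) :=
      LinearIndependent.of_comp C.dualAnnihilator.subtype h1
    have h4 := h3.fintype_card_le_finrank
    have h5 := Subspace.finrank_add_finrank_dualAnnihilator_eq C
    simp only [Fintype.card_fin, Module.finrank_fin_fun] at h4 h5
    omega
  · have h1 : (Finset.univ : Finset (Fin n)) ⊆ Finset.univ.biUnion
        (fun a => Finset.univ.filter (fun i => (e a : Fin n → F) i ≠ 0)) := by
      intro i _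
      obtain ⟨a, ha⟩ := hcov i
      simp only [Finset.mem_biUnion, Finset.mem_filter, Finset.mem_univ, true_and]
      exact ⟨a, ha⟩
    have h2 := (Finset.card_le_card h1).trans
      (Finset.card_biUnion_le_card_mul _ _ (r + 1) (fun a _ => hwt a))
    rwa [Finset.card_univ, Finset.card_univ, Fintype.card_fin, Fintype.card_fin] at h2
end

section
/- Let C be a q-ary (n,k,r) LRC with all symbol locality, where k ≥ 1 and r ≥ 1. Then k(r+1) ≤ nr, i.e., the rate satisfies k/n ≤ r/(r+1). -/
/-- Greedy construction of a small determining set `B` for a large set `U`. -/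
theorem lrc_greedy {F : Type*} [Field F] {n r : ℕ}
    (C : Submodule F (Fin n → F)) (hloc : ∀ i : Fin n, HasLocality C i r) (m : ℕ) :
    ∃ U B : Finset (Fin n), (m ≤ U.card ∨ U = Finset.univ) ∧
      B.card * (r + 1) ≤ U.card * r ∧
      ∀ c ∈ C, ∀ c' ∈ C, (∀ j ∈ B, c j = c' j) → ∀ j ∈ U, c j = c' j := by
  induction m with
  | zero => exact ⟨∅, ∅, by simp, by simp, by simp⟩
  | succ m ih =>
    obtain ⟨U, B, h1, h2, h3⟩ := ih
    by_cases hU : U = Finset.univ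
    · exact ⟨U, B, Or.inr hU, h2, h3⟩
    · have hm : m ≤ U.card := h1.resolve_right hU
      obtain ⟨i, hi⟩ : ∃ i, i ∉ U := by
        by_contra hcon
        push Not at hcon
        exact hU (Finset.eq_univ_iff_forall.2 hcon)
      obtain ⟨R, hiR, hR, hdet⟩ := hloc i
      have ht : (R \ U).card ≤ r := (Finset.card_le_card Finset.sdiff_subset).trans hR
      have hcU : (insert i (U ∪ (R \ U))).card = U.card + (R \ U).card + 1 := by
        rw [Finset.card_insert_of_notMem (by simp [hi, hiR]),
          Finset.card_union_of_disjoint Finset.disjoint_sdiff]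
      have hcB := Finset.card_union_le B (R \ U)
      refine ⟨insert i (U ∪ (R \ U)), B ∪ (R \ U), Or.inl (by omega), ?_, ?_⟩
      · rw [hcU]
        calc _ ≤ (B.card + (R \ U).card) * (r + 1) := Nat.mul_le_mul_right _ hcB
          _ ≤ _ := by nlinarith
      · intro c hc c' hc' h
        have hUc := h3 c hc c' hc' (fun j hj => h j (Finset.mem_union_left _ hj))
        have hRc : ∀ j ∈ R, c j = c' j := fun j hj => by
          by_cases hjU : j ∈ U
          · exact hUc j hjU
          · exact h j (Finset.mem_union_right _ (Finset.mem_sdiff.2 ⟨hj, hjU⟩))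
        intro j hj
        rcases Finset.mem_insert.1 hj with rfl | hj
        · exact hdet c hc c' hc' hRc
        · rcases Finset.mem_union.1 hj with hj | hj
          · exact hUc j hj
          · exact hRc j (Finset.mem_sdiff.1 hj).1

/-- Rate bound for LRCs with all symbol locality: `k(r+1) ≤ nr`, i.e. `k/n ≤ r/(r+1)`. -/
theorem stmt_2 {F : Type*} [Field F] [Fintype F]
    {n k r : ℕ} (hk : 1 ≤ k) (hr : 1 ≤ r)
    (C : Submodule F (Fin n → F)) (hCk : Module.finrank F C = k)
    (hloc : ∀ i : Fin n, HasLocality C i r) :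
    k * (r + 1) ≤ n * r := by
  obtain ⟨U, B, h1, h2, h3⟩ := lrc_greedy C hloc n
  have hU : U = Finset.univ := by
    rcases h1 with h1 | h1
    · refine (Finset.card_eq_iff_eq_univ U).1 (le_antisymm (Finset.card_le_univ U) ?_)
      simpa using h1
    · exact h1
  subst hU
  have hkB : k ≤ B.card := by
    let f : C →ₗ[F] (B → F) := (LinearMap.funLeft F F (fun j : B => (j : Fin n))).comp C.subtype
    have hf : Function.Injective f := by
      intro c c' h
      apply Subtype.ext
      funext j
      exact h3 c c.2 c' c'.2 (fun j hj => congrFun h ⟨j, hj⟩) j (Finset.mem_univ j)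
    have := LinearMap.finrank_le_finrank_of_injective hf
    simpa [hCk] using this
  calc k * (r + 1) ≤ B.card * (r + 1) := Nat.mul_le_mul_right _ hkB
    _ ≤ n * r := by simpa using h2
end

section
/- (Singleton-like bound) Let C be a q-ary (n,k,r) LRC with all symbol locality, where k ≥ 1 and r ≥ 1, and let d be its minimum distance. Then d ≤ n − k − ⌈k/r⌉ + 2. -/
/-- The minimum distance of a linear code: the least Hamming weight of a nonzero codeword. -/
noncomputable def minDist {F ι : Type*} [Field F] [Fintype ι] [DecidableEq F]
    (C : Submodule F (ι → F)) : ℕ :=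
  sInf {w | ∃ c ∈ C, c ≠ 0 ∧ hammingNorm c = w}

/-- Codewords of `C` vanishing on `S`. -/
def vanishOn {F : Type*} [Field F] {n : ℕ} (C : Submodule F (Fin n → F)) (S : Finset (Fin n)) :
    Submodule F (Fin n → F) where
  carrier := {c | c ∈ C ∧ ∀ j ∈ S, c j = 0}
  add_mem' := by
    rintro a b ⟨ha, ha'⟩ ⟨hb, hb'⟩
    exact ⟨C.add_mem ha hb, fun j hj => by simp [ha' j hj, hb' j hj]⟩
  zero_mem' := ⟨C.zero_mem, fun j _ => rfl⟩
  smul_mem' := by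
    rintro x a ⟨ha, ha'⟩
    exact ⟨C.smul_mem x ha, fun j hj => by simp [ha' j hj]⟩

lemma mem_vanishOn {F : Type*} [Field F] {n : ℕ} {C : Submodule F (Fin n → F)}
    {S : Finset (Fin n)} {c : Fin n → F} :
    c ∈ vanishOn C S ↔ c ∈ C ∧ ∀ j ∈ S, c j = 0 := Iff.rfl

lemma finrank_vanishOn_insert {F : Type*} [Field F] {n : ℕ} (C : Submodule F (Fin n → F))
    (S : Finset (Fin n)) (i : Fin n) :
    Module.finrank F (vanishOn C S) ≤ Module.finrank F (vanishOn C (insert i S)) + 1 := by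
  have e : vanishOn C (insert i S) =
      vanishOn C S ⊓ LinearMap.ker (LinearMap.proj i : (Fin n → F) →ₗ[F] F) := by
    ext c
    simp only [mem_vanishOn, Submodule.mem_inf, Finset.forall_mem_insert, LinearMap.mem_ker,
      LinearMap.proj_apply]
    tauto
  have h1 := Submodule.finrank_sup_add_finrank_inf_eq (vanishOn C S)
    (LinearMap.ker (LinearMap.proj i : (Fin n → F) →ₗ[F] F))
  have h2 := Submodule.finrank_le (vanishOn C S ⊔
    LinearMap.ker (LinearMap.proj i : (Fin n → F) →ₗ[F] F))
  have h3 := LinearMap.finrank_range_add_finrank_ker (LinearMap.proj i : (Fin n → F) →ₗ[F] F)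
  have h4 := Submodule.finrank_le (LinearMap.range (LinearMap.proj i : (Fin n → F) →ₗ[F] F))
  rw [Module.finrank_self] at h4
  rw [e]
  omega

lemma finrank_vanishOn_union {F : Type*} [Field F] {n : ℕ} (C : Submodule F (Fin n → F))
    (S R : Finset (Fin n)) :
    Module.finrank F (vanishOn C S) + S.card ≤
      Module.finrank F (vanishOn C (S ∪ R)) + (S ∪ R).card := by
  induction R using Finset.induction_on with
  | empty => rw [Finset.union_empty]
  | insert a R _ ih =>
    rw [Finset.union_insert]
    by_cases h : a ∈ S ∪ R
    · rwa [Finset.insert_eq_of_mem h]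
    · rw [Finset.card_insert_of_notMem h]
      have := finrank_vanishOn_insert C (S ∪ R) a
      omega

lemma exists_undetermined {F : Type*} [Field F] {n : ℕ} (C : Submodule F (Fin n → F))
    (S : Finset (Fin n)) (h : 1 ≤ Module.finrank F (vanishOn C S)) :
    ∃ c ∈ vanishOn C S, ∃ i, c i ≠ 0 := by
  by_contra! hc
  have : vanishOn C S = ⊥ := by
    rw [Submodule.eq_bot_iff]
    intro c hcm
    ext i
    exact hc c hcm i
  rw [this, finrank_bot] at h
  omega

lemma exists_set {F : Type*} [Field F] {n k r : ℕ} (C : Submodule F (Fin n → F))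
    (hCk : Module.finrank F C = k) (hloc : ∀ i : Fin n, HasLocality C i r) (m : ℕ)
    (hm : m * r + 1 ≤ k) :
    ∃ S : Finset (Fin n), k ≤ Module.finrank F (vanishOn C S) + m * r ∧
      k + m ≤ S.card + Module.finrank F (vanishOn C S) := by
  induction m with
  | zero =>
    have : vanishOn C ∅ = C := by ext c; simp [mem_vanishOn]
    exact ⟨∅, by rw [this]; omega, by rw [this]; omega⟩
  | succ m ih =>
    rw [Nat.succ_mul] at hm
    obtain ⟨S, h1, h2⟩ := ih (by omega)
    obtain ⟨c, hc, i, hi⟩ := exists_undetermined C S (by omega)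
    obtain ⟨R, hiR, hRr, hR⟩ := hloc i
    have hiS : i ∉ S := fun h => hi (hc.2 i h)
    have e : vanishOn C (insert i (S ∪ R)) = vanishOn C (S ∪ R) := by
      ext x
      simp only [mem_vanishOn, Finset.forall_mem_insert]
      constructor
      · tauto
      · rintro ⟨hx, hx'⟩
        exact ⟨hx, hR x hx 0 C.zero_mem (fun j hj => hx' j (Finset.mem_union_right _ hj)), hx'⟩
    have hu := finrank_vanishOn_union C S R
    have hcard := Finset.card_union_le S R
    refine ⟨insert i (S ∪ R), ?_, ?_⟩
    · rw [e, Nat.succ_mul]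
      omega
    · rw [e, Finset.card_insert_of_notMem (by simp [hiS, hiR])]
      omega

lemma exists_set_final {F : Type*} [Field F] {n : ℕ} (C : Submodule F (Fin n → F)) (t z : ℕ)
    (S : Finset (Fin n)) (hz : Module.finrank F (vanishOn C S) = z) (h1 : 1 ≤ z)
    (h2 : t ≤ S.card + z) :
    ∃ S : Finset (Fin n), 1 ≤ Module.finrank F (vanishOn C S) ∧ t ≤ S.card + 1 := by
  obtain ⟨N, hN⟩ : ∃ N, N = n - S.card := ⟨_, rfl⟩
  induction N generalizing S z with
  | zero =>
    obtain ⟨c, hc, i, hi⟩ := exists_undetermined C S (by omega)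
    have hiS : i ∉ S := fun h => hi (hc.2 i h)
    have := Finset.card_le_univ (insert i S)
    rw [Finset.card_insert_of_notMem hiS, Fintype.card_fin] at this
    omega
  | succ N ih =>
    by_cases hz1 : z = 1
    · exact ⟨S, by omega, by omega⟩
    obtain ⟨c, hc, i, hi⟩ := exists_undetermined C S (by omega)
    have hiS : i ∉ S := fun h => hi (hc.2 i h)
    have h3 := finrank_vanishOn_insert C S i
    have h4 := Finset.card_insert_of_notMem hiS
    exact ih _ (insert i S) rfl (by omega) (by omega) (by omega)

/-- Singleton-like bound: for an `(n,k,r)` LRC with all symbol locality,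
`d ≤ n - k - ⌈k/r⌉ + 2`. -/
theorem stmt_3 {F : Type*} [Field F] [Fintype F] [DecidableEq F]
    {n k r : ℕ} (hk : 1 ≤ k) (hr : 1 ≤ r)
    (C : Submodule F (Fin n → F)) (hCk : Module.finrank F C = k)
    (hloc : ∀ i : Fin n, HasLocality C i r) :
    (minDist C : ℤ) ≤ (n : ℤ) - k - ⌈(k : ℚ) / r⌉ + 2 := by
  obtain ⟨m, hm⟩ : ∃ m, m = (k - 1) / r := ⟨_, rfl⟩
  have hmr : m * r + 1 ≤ k := by
    have := Nat.div_mul_le_self (k - 1) r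
    rw [← hm] at this
    omega
  have hceil : ⌈(k : ℚ) / r⌉ ≤ (m : ℤ) + 1 := by
    rw [Int.ceil_le]
    have hr' : (0 : ℚ) < r := by exact_mod_cast hr
    rw [div_le_iff₀ hr']
    have h := Nat.lt_div_mul_add (a := k - 1) (b := r) hr
    rw [← hm] at h
    have h' : k ≤ (m + 1) * r := by
      rw [Nat.succ_mul]
      omega
    exact_mod_cast h'
  obtain ⟨S, h1, h2⟩ := exists_set C hCk hloc m hmr
  obtain ⟨T, h3, h4⟩ := exists_set_final C (k + m) _ S rfl (by omega) h2
  obtain ⟨c, hc, i, hi⟩ := exists_undetermined C T h3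
  have h5 : minDist C ≤ hammingNorm c :=
    Nat.sInf_le ⟨c, hc.1, fun h => hi (by simp [h]), rfl⟩
  have h6 : hammingNorm c ≤ Tᶜ.card := by
    apply Finset.card_le_card
    intro j hj
    rw [Finset.mem_compl]
    intro hjT
    exact (Finset.mem_filter.mp hj).2 (hc.2 j hjT)
  have h7 := Finset.card_add_card_compl T
  rw [Fintype.card_fin] at h7
  omega
end

section
/- (General upper bound) Let C be a q-ary (n,k,r) LRC with all symbol locality, where k ≥ 1 and r ≥ 1, and let d be its minimum distance. Then d ≤ min over integers t with 1 ≤ t ≤ ⌈k/r⌉ − 1 of d_opt^{(q)}(n − t(r+1), k − tr), where d_opt^{(q)}(n*, k*) denotes the maximum possible minimum distance of a q-ary linear code of length n* and dimension k*. -/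
/-- `dOpt F n k` is the largest possible minimum distance of a linear code over `F`
of length `n` and dimension `k`. -/
noncomputable def dOpt (F : Type*) [Field F] [Fintype F] [DecidableEq F] (n k : ℕ) : ℕ :=
  sSup {d | ∃ C : Submodule F (Fin n → F), Module.finrank F C = k ∧ minDist C = d}

/-- The subcode of words of `C` vanishing on `I`. -/
def shortK {F : Type*} [Field F] {n : ℕ} (C : Submodule F (Fin n → F)) (I : Finset (Fin n)) :
    Submodule F (Fin n → F) where
  carrier := {c | c ∈ C ∧ ∀ i ∈ I, c i = 0}
  add_mem' := by
    rintro a b ⟨ha, ha'⟩ ⟨hb, hb'⟩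
    exact ⟨C.add_mem ha hb, fun i hi => by simp [ha' i hi, hb' i hi]⟩
  zero_mem' := ⟨C.zero_mem, fun _ _ => rfl⟩
  smul_mem' := by
    rintro x a ⟨ha, ha'⟩
    exact ⟨C.smul_mem x ha, fun i hi => by simp [ha' i hi]⟩

theorem mem_shortK {F : Type*} [Field F] {n : ℕ} (C : Submodule F (Fin n → F))
    (I : Finset (Fin n)) (c : Fin n → F) : c ∈ shortK C I ↔ c ∈ C ∧ ∀ i ∈ I, c i = 0 := Iff.rfl

theorem shortK_insert {F : Type*} [Field F] {n : ℕ} (C : Submodule F (Fin n → F))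
    (I : Finset (Fin n)) (i : Fin n) :
    Module.finrank F (shortK C I) ≤ Module.finrank F (shortK C (insert i I)) + 1 := by
  let f : shortK C I →ₗ[F] F := (LinearMap.proj i).comp (shortK C I).subtype
  have h1 := LinearMap.finrank_range_add_finrank_ker f
  have h2 : Module.finrank F (LinearMap.range f) ≤ 1 := by
    simpa using Submodule.finrank_le (LinearMap.range f)
  have h3 : Module.finrank F (LinearMap.ker f) ≤ Module.finrank F (shortK C (insert i I)) := by
    rw [← Submodule.finrank_map_subtype_eq]
    apply Submodule.finrank_mono
    rintro _ ⟨⟨c, hc⟩, hc', rfl⟩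
    have hc0 : c i = 0 := hc'
    refine ⟨hc.1, fun j hj => ?_⟩
    rcases Finset.mem_insert.1 hj with rfl | hj
    · exact hc0
    · exact hc.2 j hj
  omega

theorem shortK_mono {F : Type*} [Field F] {n : ℕ} (C : Submodule F (Fin n → F))
    (I J : Finset (Fin n)) (hIJ : I ⊆ J) :
    Module.finrank F (shortK C I) + I.card ≤ Module.finrank F (shortK C J) + J.card := by
  have key : ∀ S : Finset (Fin n), Module.finrank F (shortK C I) + I.card ≤
      Module.finrank F (shortK C (S ∪ I)) + (S ∪ I).card := by
    intro S
    induction S using Finset.induction_on with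
    | empty => rw [Finset.empty_union]
    | insert a S ha ih =>
      rw [Finset.insert_union]
      by_cases h : a ∈ S ∪ I
      · rw [Finset.insert_eq_of_mem h]; exact ih
      · have := shortK_insert C (S ∪ I) a
        rw [Finset.card_insert_of_notMem h]
        omega
  have := key J
  rwa [Finset.union_eq_left.2 hIJ] at this

theorem shortK_univ {F : Type*} [Field F] {n : ℕ} (C : Submodule F (Fin n → F)) :
    Module.finrank F (shortK C Finset.univ) = 0 := by
  have : shortK C Finset.univ = ⊥ := by
    rw [eq_bot_iff]
    intro c hc
    rw [Submodule.mem_bot]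
    funext i
    exact hc.2 i (Finset.mem_univ i)
  rw [this]; simp

theorem shortK_exists {F : Type*} [Field F] {n k r : ℕ}
    (C : Submodule F (Fin n → F)) (hCk : Module.finrank F C = k)
    (hloc : ∀ i : Fin n, HasLocality C i r) (t : ℕ) (ht : t * r < k) :
    ∃ I : Finset (Fin n), I.card ≤ t * (r + 1) ∧
      k + t ≤ Module.finrank F (shortK C I) + I.card := by
  induction t with
  | zero =>
    refine ⟨∅, by simp, ?_⟩
    have : shortK C ∅ = C := by ext c; simp [mem_shortK]
    rw [this]; simp [hCk]
  | succ t ih =>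
    have ht' : t * r < k := by nlinarith
    obtain ⟨I, hI, hI2⟩ := ih ht'
    have hne : ∃ i, i ∉ I := by
      by_contra! h
      have : I = Finset.univ := Finset.eq_univ_of_forall h
      rw [this, shortK_univ] at hI2
      rw [this] at hI
      nlinarith
    obtain ⟨i, hi⟩ := hne
    obtain ⟨R, hiR, hR, hrec⟩ := hloc i
    have hnot : i ∉ I ∪ R := by simp [hi, hiR]
    refine ⟨insert i (I ∪ R), ?_, ?_⟩
    · rw [Finset.card_insert_of_notMem hnot]
      have := Finset.card_union_le I R
      nlinarith
    · have h1 := shortK_mono C I (I ∪ R) Finset.subset_union_left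
      have h2 : shortK C (insert i (I ∪ R)) = shortK C (I ∪ R) := by
        ext c
        constructor
        · intro hc
          exact ⟨hc.1, fun j hj => hc.2 j (Finset.mem_insert_of_mem hj)⟩
        · intro hc
          refine ⟨hc.1, fun j hj => ?_⟩
          rcases Finset.mem_insert.1 hj with rfl | hj
          · exact hrec c hc.1 0 C.zero_mem
              (fun l hl => hc.2 l (Finset.mem_union_right _ hl))
          · exact hc.2 j hj
      rw [h2, Finset.card_insert_of_notMem hnot]
      omega

theorem minDist_le_length {F : Type*} [Field F] [DecidableEq F] {n : ℕ}
    (C : Submodule F (Fin n → F)) : minDist C ≤ n := by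
  unfold minDist
  rcases Set.eq_empty_or_nonempty {w | ∃ c ∈ C, c ≠ 0 ∧ hammingNorm c = w} with h | h
  · rw [h]; simp
  · obtain ⟨w, c, hc, h0, hw⟩ := h
    have h1 : sInf {w | ∃ c ∈ C, c ≠ 0 ∧ hammingNorm c = w} ≤ hammingNorm c :=
      Nat.sInf_le ⟨c, hc, h0, rfl⟩
    refine h1.trans ?_
    simpa using hammingNorm_le_card_fintype (x := c)

/-- A code supported off `I` gives a lower bound on `dOpt`. -/
theorem le_dOpt_of_support {F : Type*} [Field F] [Fintype F] [DecidableEq F] {n m l : ℕ}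
    (C D : Submodule F (Fin n → F)) (I : Finset (Fin n)) (hI : Iᶜ.card = m) (hl : 1 ≤ l)
    (hD : D ≤ shortK C I) (hDl : Module.finrank F D = l) : minDist C ≤ dOpt F m l := by
  let e : Fin m ↪o Fin n := Iᶜ.orderEmbOfFin hI
  have hrange : ∀ i, i ∉ I → ∃ j, e j = i := by
    intro i hi
    have : i ∈ Set.range (Iᶜ.orderEmbOfFin hI) := by
      rw [Finset.range_orderEmbOfFin]; simpa using hi
    exact this
  have hzero : ∀ c ∈ D, ∀ i, (∀ j, e j ≠ i) → c i = 0 := by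
    intro c hc i hi
    apply (hD hc).2
    by_contra h
    obtain ⟨j, hj⟩ := hrange i h
    exact hi j hj
  let f : (Fin n → F) →ₗ[F] (Fin m → F) := LinearMap.funLeft F F e
  have hker : ∀ c ∈ D, f c = 0 → c = 0 := by
    intro c hc h
    funext i
    by_cases hi : ∃ j, e j = i
    · obtain ⟨j, rfl⟩ := hi
      exact congrFun h j
    · push Not at hi
      exact hzero c hc i hi
  have hnorm : ∀ c ∈ D, hammingNorm (f c) = hammingNorm c := by
    intro c hc
    unfold hammingNorm
    rw [← Finset.card_map e.toEmbedding]
    congr 1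
    ext i
    simp only [Finset.mem_map, Finset.mem_filter, Finset.mem_univ, true_and]
    constructor
    · rintro ⟨j, hj, rfl⟩
      exact hj
    · intro h
      by_contra hcon
      refine h (hzero c hc i fun j hj => hcon ⟨j, ?_, hj⟩)
      subst hj
      exact h
  have hfin : Module.finrank F (D.map f) = l := by
    rw [← hDl]
    have hinj : Function.Injective (f.domRestrict D) := by
      rw [← LinearMap.ker_eq_bot, eq_bot_iff]
      rintro ⟨c, hc⟩ h
      rw [Submodule.mem_bot]
      exact Subtype.ext (hker c hc h)
    rw [← LinearMap.finrank_range_of_inj hinj, LinearMap.range_domRestrict]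
  have hle : minDist C ≤ minDist (D.map f) := by
    have hne : {w | ∃ c ∈ D.map f, c ≠ 0 ∧ hammingNorm c = w}.Nonempty := by
      have : D.map f ≠ ⊥ := by
        intro h
        rw [h] at hfin
        simp at hfin
        omega
      obtain ⟨c, hc, h0⟩ := Submodule.exists_mem_ne_zero_of_ne_bot this
      exact ⟨_, c, hc, h0, rfl⟩
    obtain ⟨c, hc, h0, hw⟩ := Nat.sInf_mem hne
    obtain ⟨b, hb, rfl⟩ := hc
    unfold minDist
    rw [← hw, hnorm b hb]
    refine Nat.sInf_le ⟨b, (hD hb).1, ?_, rfl⟩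
    rintro rfl
    exact h0 (map_zero f)
  refine hle.trans (le_csSup ⟨m, ?_⟩ ⟨D.map f, hfin, rfl⟩)
  rintro _ ⟨E, _, rfl⟩
  exact minDist_le_length E

/-- General upper bound: for an `(n,k,r)` LRC with all symbol locality and minimum distance `d`,
`d ≤ d_opt^{(q)}(n - t(r+1), k - tr)` for every `t` with `1 ≤ t ≤ ⌈k/r⌉ - 1`. -/
theorem stmt_5 {F : Type*} [Field F] [Fintype F] [DecidableEq F]
    {n k r : ℕ} (hk : 1 ≤ k) (hr : 1 ≤ r)
    (C : Submodule F (Fin n → F)) (hCk : Module.finrank F C = k)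
    (hloc : ∀ i : Fin n, HasLocality C i r) :
    ∀ t : ℕ, 1 ≤ t → (t : ℤ) ≤ ⌈(k : ℚ) / r⌉ - 1 →
      minDist C ≤ dOpt F (n - t * (r + 1)) (k - t * r) := by
  intro t ht htk
  have hr0 : (0 : ℚ) < r := by exact_mod_cast hr
  have hlt : t * r < k := by
    have h1 : (t : ℤ) < ⌈(k : ℚ) / r⌉ := by omega
    rw [Int.lt_ceil, lt_div_iff₀ hr0] at h1
    exact_mod_cast h1
  obtain ⟨I, hI, hI2⟩ := shortK_exists C hCk hloc t hlt
  have hn : t * (r + 1) ≤ n := by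
    have h := shortK_mono C I Finset.univ (Finset.subset_univ I)
    rw [shortK_univ, Finset.card_univ, Fintype.card_fin] at h
    nlinarith
  obtain ⟨J, hIJ, hJ⟩ := Finset.exists_superset_card_eq hI (by simpa using hn)
  have hK : k - t * r ≤ Module.finrank F (shortK C J) := by
    have h := shortK_mono C I J hIJ
    rw [hJ, Nat.mul_succ] at h
    omega
  obtain ⟨D, hD, hDl⟩ : ∃ D ≤ shortK C J, Module.finrank F D = k - t * r := by
    obtain ⟨f, hf⟩ := exists_linearIndependent_of_le_finrank hK
    refine ⟨(Submodule.span F (Set.range f)).map (shortK C J).subtype, ?_, ?_⟩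
    · rintro _ ⟨x, _, rfl⟩
      exact x.2
    · rw [Submodule.finrank_map_subtype_eq, finrank_span_eq_card hf, Fintype.card_fin]
  refine le_dOpt_of_support C D J ?_ (by omega) hD hDl
  rw [Finset.card_compl, hJ, Fintype.card_fin]
end

section
/- Let C be a q-ary (n,k,r) LRC with all symbol locality and minimum distance d, with 1 ≤ r < k, r dividing k, and d = n − k − k/r + 2. Then (r+1) divides n. -/
section aux

variable {α : Type*} [Fintype α] [DecidableEq α]

theorem aux_nu_mono (ρ : Finset α → ℤ) (hle : ∀ S, ρ S ≤ S.card) (h0 : ∀ S, 0 ≤ ρ S)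
    (hsub : ∀ A B, ρ (A ∪ B) + ρ (A ∩ B) ≤ ρ A + ρ B) (S T : Finset α) (h : S ⊆ T) :
    (S.card : ℤ) - ρ S ≤ T.card - ρ T := by
  have h1 := hsub S (T \ S)
  have h2 := hle (T \ S)
  have h3 := h0 (S ∩ (T \ S))
  have h4 := Finset.card_sdiff_add_card_eq_card h
  rw [Finset.union_sdiff_of_subset h] at h1
  push_cast [← h4]
  linarith

theorem aux_base (ρ : Finset α → ℤ) (hle : ∀ S, ρ S ≤ S.card) (h0 : ∀ S, 0 ≤ ρ S)
    (hsub : ∀ A B, ρ (A ∪ B) + ρ (A ∩ B) ≤ ρ A + ρ B) (k m : ℤ)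
    (hu : ρ Finset.univ = k)
    (H : ∀ S, ρ S ≤ k - 1 → (S.card : ℤ) ≤ k + m - 2)
    (S : Finset α) (h1 : m ≤ S.card - ρ S) (h2 : ρ S ≤ k - 1) : False := by
  classical
  obtain ⟨M, hM, hmax⟩ := Finset.exists_max_image
    (Finset.univ.filter fun T : Finset α => m ≤ T.card - ρ T ∧ ρ T ≤ k - 1)
    (fun T => T.card) ⟨S, Finset.mem_filter.mpr ⟨Finset.mem_univ _, h1, h2⟩⟩
  simp only [Finset.mem_filter, Finset.mem_univ, true_and] at hM hmax
  have h3 := H M hM.2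
  have hne : ∃ x, x ∉ M := by
    by_contra! hc
    have : M = Finset.univ := by ext; simp [hc]
    rw [this] at hM
    linarith [hM.2]
  obtain ⟨x, hx⟩ := hne
  have h4 := aux_nu_mono ρ hle h0 hsub M (insert x M) (Finset.subset_insert _ _)
  have h5 := hmax (insert x M)
  rw [Finset.card_insert_of_notMem hx] at h4 h5
  push_cast at h4 h5
  have := h5 ⟨by linarith, by linarith⟩
  omega

theorem aux_greedy (ρ : Finset α → ℤ) (hle : ∀ S, ρ S ≤ S.card) (h0 : ∀ S, 0 ≤ ρ S)
    (hsub : ∀ A B, ρ (A ∪ B) + ρ (A ∩ B) ≤ ρ A + ρ B) (k m r : ℤ) (hr : 0 ≤ r)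
    (hk : k = m * r)
    (hu : ρ Finset.univ = k)
    (H : ∀ S, ρ S ≤ k - 1 → (S.card : ℤ) ≤ k + m - 2)
    (L : α → Finset α) (hmem : ∀ i, i ∈ L i) (hcard : ∀ i, ((L i).card : ℤ) ≤ r + 1)
    (hL : ∀ i, ρ ((L i).erase i) = ρ (L i)) (t : ℕ) :
    ∀ S : Finset α, m - t ≤ S.card - ρ S → ρ S ≤ (m - t) * r - 1 → False := by
  induction t with
  | zero =>
    intro S h1 h2
    refine aux_base ρ hle h0 hsub k m hu H S (by simpa using h1) ?_
    rw [hk]; simpa using h2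
  | succ t ih =>
    intro S h1 h2
    push_cast at h1 h2
    have hlt : ρ S < k := by
      rw [hk]
      have : 0 ≤ ((t : ℤ) + 1) * r := by positivity
      nlinarith
    have hne : ∃ x, x ∉ S := by
      by_contra! hc
      have : S = Finset.univ := by ext; simp [hc]
      rw [this] at hlt
      linarith
    obtain ⟨j, hj⟩ := hne
    have hc := Finset.card_erase_add_one (hmem j)
    have hs := hsub S (L j)
    have hm1 := aux_nu_mono ρ hle h0 hsub (S ∩ L j) ((L j).erase j) (by
      intro x hx
      simp only [Finset.mem_inter, Finset.mem_erase] at hx ⊢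
      exact ⟨fun h => hj (h ▸ hx.1), hx.2⟩)
    have hci := Finset.card_union_add_card_inter S (L j)
    have h6 := hL j
    have h7 := hcard j
    have h8 := hle ((L j).erase j)
    have h9 := h0 (S ∩ L j)
    zify at hc hci
    refine ih (S ∪ L j) (by linarith) ?_
    nlinarith

theorem aux_main (ρ : Finset α → ℤ) (hle : ∀ S, ρ S ≤ S.card) (h0 : ∀ S, 0 ≤ ρ S)
    (hsub : ∀ A B, ρ (A ∪ B) + ρ (A ∩ B) ≤ ρ A + ρ B) (k m r : ℕ) (hm : 2 ≤ m)
    (hk : k = m * r)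
    (hu : ρ Finset.univ = k)
    (H : ∀ S, ρ S ≤ k - 1 → (S.card : ℤ) ≤ k + m - 2)
    (L : α → Finset α) (hmem : ∀ i, i ∈ L i) (hcard : ∀ i, (L i).card ≤ r + 1)
    (hL : ∀ i, ρ ((L i).erase i) = ρ (L i)) : (r + 1) ∣ Fintype.card α := by
  have G := aux_greedy ρ hle h0 hsub k m r (by positivity) (by exact_mod_cast hk) hu H L hmem
    (fun i => by exact_mod_cast hcard i) hL
  have G1 : ∀ S : Finset α, 1 ≤ S.card - ρ S → S.card ≤ r → False := by
    intro S h1 h2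
    have e : (m : ℤ) - ((m - 1 : ℕ) : ℤ) = 1 := by omega
    have := G (m - 1) S
    rw [e] at this
    zify at h2
    exact this h1 (by linarith)
  have G2 : ∀ S : Finset α, 2 ≤ S.card - ρ S → S.card ≤ 2 * r + 1 → False := by
    intro S h1 h2
    have e : (m : ℤ) - ((m - 2 : ℕ) : ℤ) = 2 := by omega
    have := G (m - 2) S
    rw [e] at this
    zify at h2
    exact this h1 (by linarith)
  have hnu : ∀ i, 1 ≤ ((L i).card : ℤ) - ρ (L i) := by
    intro i
    have hc := Finset.card_erase_add_one (hmem i)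
    have h8 := hle ((L i).erase i)
    have h6 := hL i
    zify at hc
    linarith
  have hcard' : ∀ i, (L i).card = r + 1 := by
    intro i
    have := hcard i
    by_contra hne
    exact G1 (L i) (hnu i) (by omega)
  have hdis : ∀ i j, j ∈ L i → L j = L i := by
    intro i j hj
    by_contra hne
    have hpos : 1 ≤ (L j ∩ L i).card :=
      Finset.card_pos.mpr ⟨j, Finset.mem_inter.mpr ⟨hmem j, hj⟩⟩
    have hlt : (L j ∩ L i).card ≤ r := by
      by_contra hc
      have e1 : L j ∩ L i = L j :=
        Finset.eq_of_subset_of_card_le Finset.inter_subset_left (by rw [hcard']; omega)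
      have e2 : L j ∩ L i = L i :=
        Finset.eq_of_subset_of_card_le Finset.inter_subset_right (by rw [hcard']; omega)
      exact hne (e1.symm.trans e2)
    have hn : ((L j ∩ L i).card : ℤ) - ρ (L j ∩ L i) < 1 := by
      by_contra hc
      exact G1 _ (not_lt.mp hc) hlt
    have hci := Finset.card_union_add_card_inter (L j) (L i)
    have hs := hsub (L j) (L i)
    have n1 := hnu i
    have n2 := hnu j
    have c1 := hcard' i
    have c2 := hcard' j
    refine G2 (L j ∪ L i) ?_ (by omega)
    omega
  rw [← Finset.card_univ, Finset.card_eq_sum_card_image L]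
  refine Finset.dvd_sum ?_
  intro b hb
  obtain ⟨i, -, rfl⟩ := Finset.mem_image.mp hb
  have : (Finset.univ.filter fun j => L j = L i) = L i := by
    ext j
    simp only [Finset.mem_filter, Finset.mem_univ, true_and]
    exact ⟨fun h => h ▸ hmem j, hdis i j⟩
  rw [this, hcard']

end aux

/-- Restriction of a code to the coordinates in `S`. -/
def auxRes {F ι : Type*} [Field F] (C : Submodule F (ι → F)) (S : Finset ι) :
    C →ₗ[F] (S → F) :=
  (LinearMap.funLeft F F (fun x : S => (x : ι))).comp C.subtype

theorem auxRes_mem_ker {F ι : Type*} [Field F] (C : Submodule F (ι → F)) (S : Finset ι) (c : C) :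
    c ∈ LinearMap.ker (auxRes C S) ↔ ∀ j ∈ S, (c : ι → F) j = 0 := by
  rw [LinearMap.mem_ker, funext_iff]
  simp [auxRes, LinearMap.funLeft_apply]

/-- For an `(n,k,r)` LRC with all symbol locality, `1 ≤ r < k`, `r ∣ k`, meeting the
Singleton-like bound `d = n - k - k/r + 2`, we must have `(r+1) ∣ n`. -/
theorem stmt_7 {F : Type*} [Field F] [Fintype F] [DecidableEq F]
    {n k r : ℕ} (hr : 1 ≤ r) (hrk : r < k) (hdvd : r ∣ k)
    (C : Submodule F (Fin n → F)) (hCk : Module.finrank F C = k)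
    (hloc : ∀ i : Fin n, HasLocality C i r)
    (hd : (minDist C : ℤ) = (n : ℤ) - k - (k / r : ℕ) + 2) :
    (r + 1) ∣ n := by
  obtain ⟨m, rfl⟩ := hdvd
  rw [Nat.mul_div_cancel_left m (by omega)] at hd
  have hm : 2 ≤ m := by
    by_contra hc
    have : m ≤ 1 := by omega
    nlinarith
  have hrn : ∀ S : Finset (Fin n), (Module.finrank F (LinearMap.range (auxRes C S)) : ℤ)
      + Module.finrank F (LinearMap.ker (auxRes C S)) = (r * m : ℕ) := by
    intro S
    have := LinearMap.finrank_range_add_finrank_ker (auxRes C S)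
    rw [hCk] at this
    exact_mod_cast this
  choose R hR1 hR2 hR3 using hloc
  have key := aux_main (α := Fin n)
    (fun S => (Module.finrank F (LinearMap.range (auxRes C S)) : ℤ)) ?_ ?_ ?_ (r * m) m r hm
    (mul_comm _ _) ?_ ?_ (fun i => insert i (R i)) ?_ ?_ ?_
  · simpa using key
  · intro S
    have := Submodule.finrank_le (LinearMap.range (auxRes C S))
    simp only [Module.finrank_fintype_fun_eq_card, Fintype.card_coe] at this
    exact_mod_cast this
  · intro S; positivity
  · intro A B
    have e1 : LinearMap.ker (auxRes C (A ∪ B))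
        = LinearMap.ker (auxRes C A) ⊓ LinearMap.ker (auxRes C B) := by
      ext c
      rw [Submodule.mem_inf]
      simp only [auxRes_mem_ker, Finset.mem_union]
      exact ⟨fun h => ⟨fun j hj => h j (Or.inl hj), fun j hj => h j (Or.inr hj)⟩,
        fun h j hj => hj.elim (h.1 j) (h.2 j)⟩
    have e2 : LinearMap.ker (auxRes C A) ⊔ LinearMap.ker (auxRes C B)
        ≤ LinearMap.ker (auxRes C (A ∩ B)) := by
      refine sup_le ?_ ?_
      · intro c hc
        rw [auxRes_mem_ker] at hc ⊢
        exact fun j hj => hc j (Finset.mem_inter.mp hj).1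
      · intro c hc
        rw [auxRes_mem_ker] at hc ⊢
        exact fun j hj => hc j (Finset.mem_inter.mp hj).2
    have e3 := Submodule.finrank_mono e2
    have e4 := Submodule.finrank_sup_add_finrank_inf_eq
      (LinearMap.ker (auxRes C A)) (LinearMap.ker (auxRes C B))
    rw [← e1] at e4
    have a1 := hrn A
    have a2 := hrn B
    have a3 := hrn (A ∪ B)
    have a4 := hrn (A ∩ B)
    zify at e3 e4
    linarith
  · have h := hrn Finset.univ
    have : LinearMap.ker (auxRes C Finset.univ) = ⊥ := by
      rw [eq_bot_iff]
      intro c hc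
      rw [auxRes_mem_ker] at hc
      rw [Submodule.mem_bot]
      ext j
      exact hc j (Finset.mem_univ j)
    rw [this, finrank_bot] at h
    simpa using h
  · intro S hS
    have h := hrn S
    have hpos : 0 < Module.finrank F (LinearMap.ker (auxRes C S)) := by
      omega
    have hne : LinearMap.ker (auxRes C S) ≠ ⊥ := by
      intro hb
      rw [hb, finrank_bot] at hpos
      omega
    obtain ⟨c, hc, hc0⟩ := Submodule.exists_mem_ne_zero_of_ne_bot hne
    rw [auxRes_mem_ker] at hc
    have h1 : minDist C ≤ hammingNorm (c : Fin n → F) :=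
      Nat.sInf_le ⟨c, c.2, fun h => hc0 (Subtype.ext h), rfl⟩
    have h2 : hammingNorm (c : Fin n → F) ≤ Sᶜ.card := by
      refine Finset.card_le_card ?_
      intro j hj
      simp only [Finset.mem_filter, Finset.mem_univ, true_and] at hj
      rw [Finset.mem_compl]
      exact fun h => hj (hc j h)
    have h3 := Finset.card_add_card_compl S
    rw [Fintype.card_fin] at h3
    omega
  · intro i; exact Finset.mem_insert_self _ _
  · intro i
    exact (Finset.card_insert_le _ _).trans (by have := hR2 i; omega)
  · intro i
    rw [Finset.erase_insert (hR1 i)]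
    have e : LinearMap.ker (auxRes C (R i)) = LinearMap.ker (auxRes C (insert i (R i))) := by
      ext c
      simp only [auxRes_mem_ker, Finset.mem_insert]
      constructor
      · rintro h j (rfl | hj)
        · exact hR3 j c c.2 0 C.zero_mem (fun l hl => h l hl)
        · exact h j hj
      · exact fun h j hj => h j (Or.inr hj)
    have a1 := hrn (R i)
    have a2 := hrn (insert i (R i))
    rw [e] at a1
    linarith
end

section
/- Let C be a q-ary (n,k,r) LRC with all symbol locality and minimum distance d, with 1 ≤ r < k, r dividing k, and d = n − k − k/r + 2. Then for any k/r vectors of the dual code C⊥ that are linearly independent over F_q and each have Hamming weight at most r+1, their supports are pairwise disjoint and each of them has Hamming weight exactly r+1. -/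
lemma exists_codeword_vanishing {F : Type*} [Field F] [DecidableEq F] {n k t : ℕ}
    (C : Submodule F (Fin n → F)) (hCk : Module.finrank F C = k)
    (h : Fin t → Fin n → F)
    (hdual : ∀ a, ∀ c ∈ C, ∑ j, c j * h a j = 0)
    (hind : LinearIndependent F h) (T : Finset (Fin n))
    (hT : ∀ a j, h a j ≠ 0 → j ∈ T) (hcard : T.card < k + t) :
    ∃ c ∈ C, c ≠ 0 ∧ ∀ j ∈ T, c j = 0 := by
  classical
  by_contra hcon
  push Not at hcon
  let M : Matrix (Fin t) T F := fun a j => h a j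
  have hM : LinearIndependent F M.row := by
    rw [Fintype.linearIndependent_iff] at hind ⊢
    intro g hg
    apply hind g
    funext j
    by_cases hj : j ∈ T
    · have := congrFun hg ⟨j, hj⟩
      simpa [M, Matrix.row, Finset.sum_apply] using this
    · have h0 : ∀ a, h a j = 0 := fun a => by
        by_contra hne
        exact hj (hT a j hne)
      simp [Finset.sum_apply, h0]
  have hrank : M.rank = t := by
    simpa using LinearIndependent.rank_matrix hM
  have hrn := LinearMap.finrank_range_add_finrank_ker M.mulVecLin
  rw [Matrix.rank] at hrank
  rw [hrank, Module.finrank_fintype_fun_eq_card, Fintype.card_coe] at hrn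
  let f : C →ₗ[F] LinearMap.ker M.mulVecLin :=
    LinearMap.codRestrict _ ((LinearMap.funLeft F F (fun j : T => (j : Fin n))).comp C.subtype)
      (by
        rintro ⟨c, hc⟩
        rw [LinearMap.mem_ker]
        funext a
        have h1 := hdual a c hc
        rw [← Finset.sum_subset (Finset.subset_univ T)] at h1
        · rw [← Finset.sum_coe_sort] at h1
          rw [Matrix.mulVecLin_apply]
          change ∑ j : T, h a j * c j = 0
          rw [← h1]
          exact Finset.sum_congr rfl (fun j _ => mul_comm _ _)
        · intro j _ hj
          have : h a j = 0 := by
            by_contra hne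
            exact hj (hT a j hne)
          simp [this])
  have hf : Function.Injective f := by
    rw [injective_iff_map_eq_zero]
    rintro ⟨c, hc⟩ h0
    by_contra hne
    obtain ⟨j, hj, hj0⟩ := hcon c hc (fun h => hne (by simp [h]))
    apply hj0
    have := congrArg Subtype.val h0
    exact congrFun this ⟨j, hj⟩
  have := LinearMap.finrank_le_finrank_of_injective hf
  omega

/-- For an `(n,k,r)` LRC with all symbol locality, `1 ≤ r < k`, `r ∣ k`, meeting the
Singleton-like bound `d = n - k - k/r + 2`: any `k/r` linearly independent dual codewords,
each of Hamming weight at most `r+1`, have pairwise disjoint supports and weight exactly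
`r+1`. -/
theorem stmt_8 {F : Type*} [Field F] [Fintype F] [DecidableEq F]
    {n k r : ℕ} (hr : 1 ≤ r) (hrk : r < k) (hdvd : r ∣ k)
    (C : Submodule F (Fin n → F)) (hCk : Module.finrank F C = k)
    (hloc : ∀ i : Fin n, HasLocality C i r)
    (hd : (minDist C : ℤ) = (n : ℤ) - k - (k / r : ℕ) + 2)
    (h : Fin (k / r) → Fin n → F)
    (hdual : ∀ a, ∀ c ∈ C, ∑ j, c j * h a j = 0)
    (hind : LinearIndependent F h)
    (hwt : ∀ a, hammingNorm (h a) ≤ r + 1) :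
    (∀ a b, a ≠ b → Disjoint (Function.support (h a)) (Function.support (h b))) ∧
    (∀ a, hammingNorm (h a) = r + 1) := by
  classical
  have htr : k / r * r = k := Nat.div_mul_cancel hdvd
  revert hwt hind hdual
  revert h
  revert hd htr
  generalize k / r = t
  intro hd htr h hdual hind hwt
  let s : Fin t → Finset (Fin n) := fun a => Finset.univ.filter (fun j => h a j ≠ 0)
  have hs : ∀ a, (s a).card = hammingNorm (h a) := fun a => rfl
  have hs' : ∀ a, (s a).card ≤ r + 1 := hwt
  have hexp : t * (r + 1) = k + t := by rw [mul_add, htr, mul_one]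
  have key : t * (r + 1) ≤ (Finset.univ.biUnion s).card := by
    by_contra hlt
    push Not at hlt
    have hCpos : ∃ c ∈ C, c ≠ 0 := by
      by_contra hc
      push Not at hc
      have : C = ⊥ := (Submodule.eq_bot_iff C).2 hc
      rw [this, finrank_bot] at hCk
      omega
    have hpos : 1 ≤ minDist C := by
      obtain ⟨c, hc, hc0⟩ := hCpos
      obtain ⟨c', _, hc0', hw⟩ := Nat.sInf_mem
        (s := {w | ∃ c ∈ C, c ≠ 0 ∧ hammingNorm c = w}) ⟨_, c, hc, hc0, rfl⟩
      have h1 := hammingNorm_pos_iff.2 hc0'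
      unfold minDist
      omega
    obtain ⟨T, hST, hTc⟩ := Finset.exists_superset_card_eq
      (s := Finset.univ.biUnion s) (n := k + t - 1) (by omega) (by
        rw [Fintype.card_fin]; omega)
    obtain ⟨c, hc, hc0, hv⟩ := exists_codeword_vanishing C hCk h hdual hind T
      (fun a j hj => hST (Finset.mem_biUnion.2 ⟨a, Finset.mem_univ _, by simp [s, hj]⟩))
      (by omega)
    have h1 : minDist C ≤ hammingNorm c := Nat.sInf_le ⟨c, hc, hc0, rfl⟩
    have h2 : hammingNorm c ≤ Tᶜ.card := by
      apply Finset.card_le_card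
      intro j hj
      rw [Finset.mem_compl]
      intro hjT
      exact (Finset.mem_filter.1 hj).2 (hv j hjT)
    rw [Finset.card_compl, Fintype.card_fin] at h2
    omega
  have hrest : ∀ A : Finset (Fin t), A.card * (r + 1) ≤ (A.biUnion s).card := by
    intro A
    have h1 : Finset.univ.biUnion s = A.biUnion s ∪ Aᶜ.biUnion s := by
      rw [← Finset.union_biUnion, Finset.union_compl]
    have h2 : (Aᶜ.biUnion s).card ≤ Aᶜ.card * (r + 1) :=
      Finset.card_biUnion_le_card_mul _ _ _ (fun a _ => hs' a)
    have h3 := Finset.card_union_le (A.biUnion s) (Aᶜ.biUnion s)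
    have h4 : A.card + Aᶜ.card = t := by rw [Finset.card_add_card_compl, Fintype.card_fin]
    rw [← h1] at h3
    have h5 : A.card * (r + 1) + Aᶜ.card * (r + 1) = t * (r + 1) := by rw [← add_mul, h4]
    omega
  constructor
  · intro a b hab
    have h1 := hrest {a, b}
    rw [Finset.card_pair hab, Finset.biUnion_insert, Finset.singleton_biUnion] at h1
    have h2 := Finset.card_union_add_card_inter (s a) (s b)
    have ha := hs' a
    have hb := hs' b
    have h3 : (s a ∩ s b).card = 0 := by omega
    rw [Finset.card_eq_zero] at h3
    rw [Set.disjoint_left]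
    intro j hja hjb
    have : j ∈ s a ∩ s b := by
      simp only [s, Finset.mem_inter, Finset.mem_filter, Finset.mem_univ, true_and]
      exact ⟨hja, hjb⟩
    simp [h3] at this
  · intro a
    have h1 := hrest {a}
    rw [Finset.card_singleton, Finset.singleton_biUnion, one_mul, hs] at h1
    exact le_antisymm (hwt a) h1
end

section
/- Let C be a q-ary (n,k,r) LRC with all symbol locality and minimum distance d, with 1 ≤ r < k, r not dividing k, and d = n − k − ⌈k/r⌉ + 2. Then for any ⌈k/r⌉ vectors of the dual code C⊥ that are linearly independent over F_q and each have Hamming weight at most r+1, the union of their supports contains at least k + ⌈k/r⌉ coordinates. -/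
/-- For an `(n,k,r)` LRC with all symbol locality, `1 ≤ r < k`, `r ∤ k`, meeting the
Singleton-like bound `d = n - k - ⌈k/r⌉ + 2`: the supports of any `⌈k/r⌉` linearly independent
dual codewords of Hamming weight at most `r+1` cover at least `k + ⌈k/r⌉` coordinates. -/
theorem stmt_9 {F : Type*} [Field F] [Fintype F] [DecidableEq F]
    {n k r : ℕ} (hr : 1 ≤ r) (hrk : r < k) (hndvd : ¬ r ∣ k)
    (C : Submodule F (Fin n → F)) (hCk : Module.finrank F C = k)
    (hloc : ∀ i : Fin n, HasLocality C i r)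
    (hd : (minDist C : ℤ) = (n : ℤ) - k - ⌈(k : ℚ) / r⌉ + 2)
    (h : Fin (k ⌈/⌉ r) → Fin n → F)
    (hdual : ∀ a, ∀ c ∈ C, ∑ j, c j * h a j = 0)
    (hind : LinearIndependent F h)
    (hwt : ∀ a, hammingNorm (h a) ≤ r + 1) :
    k + k ⌈/⌉ r ≤ (Finset.univ.filter fun j : Fin n => ∃ a, h a j ≠ 0).card := by
  classical
  have _ := hr
  have _ := hndvd
  have _ := hloc
  have _ := hwt
  generalize hm : k ⌈/⌉ r = m at *
  have hceil : ⌈(k : ℚ) / r⌉ = (m : ℤ) := by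
    have hr0 : (0 : ℚ) < r := by exact_mod_cast hr
    have h1 : k ≤ r * m := by
      have := le_smul_ceilDiv (a := r) (b := k) hr
      simpa [hm] using this
    have h2 : ∀ c : ℕ, k ≤ r * c → m ≤ c := by
      intro c hc
      rw [← hm, ceilDiv_le_iff_le_mul hr]
      exact hc
    apply le_antisymm
    · rw [Int.ceil_le, div_le_iff₀ hr0]
      have : (k : ℚ) ≤ r * m := by exact_mod_cast h1
      push_cast
      linarith
    · have hnn : 0 ≤ ⌈(k : ℚ) / r⌉ := Int.ceil_nonneg (by positivity)
      obtain ⟨c, hc⟩ := Int.eq_ofNat_of_zero_le hnn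
      rw [hc]
      have h3 := Int.le_ceil ((k : ℚ) / r)
      rw [hc, div_le_iff₀ hr0] at h3
      have h4 : k ≤ r * c := by
        have : (k : ℚ) ≤ r * c := by
          push_cast at h3
          linarith
        exact_mod_cast this
      exact_mod_cast h2 c h4
  rw [hceil] at hd
  by_contra hcon
  push Not at hcon
  -- the minimum distance is positive
  have hCbot : C ≠ ⊥ := by
    rintro rfl
    simp at hCk
    omega
  obtain ⟨c0, hc0, hc0n⟩ := Submodule.exists_mem_ne_zero_of_ne_bot hCbot
  have hmem := Nat.sInf_mem (s := {w | ∃ c ∈ C, c ≠ 0 ∧ hammingNorm c = w})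
    ⟨_, c0, hc0, hc0n, rfl⟩
  have hpos : 0 < minDist C := by
    obtain ⟨c, _, hcn, hcw⟩ := hmem
    have h1 : 0 < hammingNorm c := hammingNorm_pos_iff.mpr hcn
    have h2 : hammingNorm c = minDist C := hcw
    omega
  -- enlarge the union of the supports
  obtain ⟨T, hUT, -, hT⟩ := Finset.exists_subsuperset_card_eq
    (Finset.subset_univ (Finset.univ.filter fun j : Fin n => ∃ a, h a j ≠ 0))
    (show _ ≤ k + m - 1 by omega) (by rw [Finset.card_univ, Fintype.card_fin]; omega)
  have hout : ∀ a j, j ∉ T → h a j = 0 := by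
    intro a j hj
    by_contra hne
    exact hj (hUT (by simp only [Finset.mem_filter, Finset.mem_univ, true_and]; exact ⟨a, hne⟩))
  let H : Matrix (Fin m) T F := fun a j => h a j
  have hHind : LinearIndependent F H.row := by
    rw [Fintype.linearIndependent_iff] at hind ⊢
    intro g hg
    apply hind g
    funext j
    by_cases hj : j ∈ T
    · have := congrFun hg ⟨j, hj⟩
      simpa [H, Matrix.row, Finset.sum_apply] using this
    · simp [Finset.sum_apply, hout _ j hj]
  have hrank : H.rank = m := by
    simpa using hHind.rank_matrix
  let P : C →ₗ[F] (T → F) := (LinearMap.funLeft F F (Subtype.val : T → Fin n)).comp C.subtype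
  have hle : LinearMap.range P ≤ LinearMap.ker H.mulVecLin := by
    rintro _ ⟨c, rfl⟩
    rw [LinearMap.mem_ker]
    funext a
    have h1 := hdual a c c.2
    have h2 : ∑ j ∈ T, (c : Fin n → F) j * h a j = 0 := by
      rw [← h1]
      exact Finset.sum_subset (Finset.subset_univ _) (fun j _ hj => by rw [hout a j hj, mul_zero])
    rw [← Finset.sum_coe_sort] at h2
    simp only [Matrix.mulVecLin_apply, Matrix.mulVec, dotProduct, Pi.zero_apply]
    rw [← h2]
    exact Finset.sum_congr rfl (fun j _ => mul_comm _ _)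
  have hrn := LinearMap.finrank_range_add_finrank_ker H.mulVecLin
  have hr' : Module.finrank F (LinearMap.range H.mulVecLin) = m := hrank
  rw [hr', Module.finrank_fintype_fun_eq_card, Fintype.card_coe, hT] at hrn
  have hle' := Submodule.finrank_mono hle
  have hP := LinearMap.finrank_range_add_finrank_ker P
  rw [hCk] at hP
  have hker : LinearMap.ker P ≠ ⊥ := by
    intro hb
    rw [hb, finrank_bot] at hP
    omega
  obtain ⟨c, hc, hcn⟩ := Submodule.exists_mem_ne_zero_of_ne_bot hker
  have hz : ∀ j ∈ T, (c : Fin n → F) j = 0 := fun j hj =>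
    congrFun (LinearMap.mem_ker.mp hc) ⟨j, hj⟩
  have hw : hammingNorm (c : Fin n → F) ≤ n - (k + m - 1) := by
    have : (Finset.univ.filter fun j => (c : Fin n → F) j ≠ 0) ⊆ Tᶜ := by
      intro j hj
      rw [Finset.mem_compl]
      intro hjT
      exact (Finset.mem_filter.mp hj).2 (hz j hjT)
    have h3 := Finset.card_le_card this
    rw [Finset.card_compl, Fintype.card_fin, hT] at h3
    exact h3
  have hmin : minDist C ≤ hammingNorm (c : Fin n → F) :=
    Nat.sInf_le ⟨c, c.2, fun h0 => hcn (Subtype.ext h0), rfl⟩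
  omega
end

section
/- Let q be a prime power, m ≥ 1, and let β_1, …, β_n be elements of F_{q^m}. Consider the n×n Moore matrix B with entries B_{ij} = β_i^{q^{j−1}} for 1 ≤ i, j ≤ n. Then det(B) ≠ 0 if and only if β_1, …, β_n are linearly independent over the subfield F_q. -/
/-- The `j`-th power Frobenius over `K`, as a `K`-linear map. -/
theorem moore_exists_frob (K L : Type*) [Field K] [Fintype K] [Field L] [Algebra K L] (j : ℕ) :
    ∃ φ : L →ₗ[K] L, ∀ x, φ x = x ^ Fintype.card K ^ j := by
  induction j with
  | zero => exact ⟨LinearMap.id, fun x => by simp⟩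
  | succ j ih =>
    obtain ⟨φ, h⟩ := ih
    refine ⟨(FiniteField.frobeniusAlgHom K L).toLinearMap.comp φ, fun x => ?_⟩
    simp [h, pow_succ, pow_mul]

/-- Moore determinant criterion: for `β₁, …, βₙ` in `F_{q^m}`, the `n × n` Moore matrix
`B` with `B i j = βᵢ ^ (q ^ j)` has nonzero determinant iff `β₁, …, βₙ` are linearly
independent over the subfield `F_q`. -/
theorem stmt_10 {K L : Type*} [Field K] [Fintype K] [Field L] [Fintype L] [Algebra K L]
    {m : ℕ} (hm : 1 ≤ m) (hcard : Fintype.card L = Fintype.card K ^ m)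
    {n : ℕ} (β : Fin n → L) :
    (Matrix.of fun i j : Fin n => β i ^ Fintype.card K ^ (j : ℕ)).det ≠ 0 ↔
      LinearIndependent K β := by
  classical
  choose φ hφ using moore_exists_frob K L
  constructor
  · intro hdet
    rw [Fintype.linearIndependent_iff]
    intro c hc i
    have h := Matrix.eq_zero_of_vecMul_eq_zero hdet (v := fun i => algebraMap K L (c i)) (by
      funext j
      have h2 := congrArg (φ j) hc
      simp only [map_sum, map_smul, map_zero] at h2
      simp only [hφ, Algebra.smul_def] at h2
      simpa [Matrix.vecMul, dotProduct] using h2)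
    have := congrFun h i
    simpa using this
  · intro hli hdet
    obtain ⟨v, hv, hB⟩ := Matrix.exists_mulVec_eq_zero_iff.mpr hdet
    have hq : 1 < Fintype.card K := Fintype.one_lt_card
    set P : Polynomial L :=
      ∑ j : Fin n, Polynomial.monomial (Fintype.card K ^ (j : ℕ)) (v j) with hP
    have hroot : ∀ c : Fin n → K, P.eval (∑ i, c i • β i) = 0 := by
      intro c
      have h1 : P.eval (∑ i, c i • β i) = ∑ j : Fin n, v j * φ j (∑ i, c i • β i) := by
        simp [hP, Polynomial.eval_finsetSum, hφ]
      rw [h1]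
      simp only [map_sum, map_smul, Finset.mul_sum]
      simp only [hφ]
      rw [Finset.sum_comm]
      refine Finset.sum_eq_zero fun i _ => ?_
      have h2 := congrFun hB i
      simp only [Matrix.mulVec, dotProduct, Matrix.of_apply, Pi.zero_apply] at h2
      rw [← smul_zero (c i), ← h2, Finset.smul_sum]
      refine Finset.sum_congr rfl fun j _ => ?_
      rw [mul_smul_comm, mul_comm]
    have hinj : Function.Injective (fun c : Fin n → K => ∑ i, c i • β i) := by
      intro c d hcd
      funext i
      have := Fintype.linearIndependent_iff.mp hli (fun i => c i - d i)
        (by simpa [sub_smul, sub_eq_zero] using hcd) i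
      exact sub_eq_zero.mp this
    have hdeg : P.natDegree ≤ Fintype.card K ^ n - 1 := by
      refine Polynomial.natDegree_sum_le_of_forall_le _ _ fun j _ => ?_
      refine (Polynomial.natDegree_monomial_le _).trans ?_
      have := Nat.pow_lt_pow_right hq j.2
      omega
    have hP0 : P = 0 := by
      refine Polynomial.eq_zero_of_natDegree_lt_card_of_eval_eq_zero P hinj hroot ?_
      have : 0 < Fintype.card K ^ n := by positivity
      simp only [Fintype.card_fun, Fintype.card_fin]
      omega
    apply hv
    funext j
    have h := congrArg (fun p => p.coeff (Fintype.card K ^ (j : ℕ))) hP0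
    simp only [hP, Polynomial.finsetSum_coeff, Polynomial.coeff_monomial,
      Polynomial.coeff_zero] at h
    rw [Finset.sum_eq_single j] at h
    · simpa using h
    · intro k _ hk
      rw [if_neg]
      intro he
      exact hk (Fin.ext (Nat.pow_right_injective hq he))
    · simp
end

section
/- Let q be a prime power, F_{q^m} an extension field of F_q, and let l ≥ 1, r ≥ 1. Let α_{i,j} ∈ F_{q^m} for i ∈ {1,…,l}, j ∈ {1,…,r+1}, and suppose the lr elements {α_{i,j} − α_{i,r+1} : i ∈ {1,…,l}, j ∈ {1,…,r}} are linearly independent over F_q. Then for every choice of indices w_1, …, w_l with w_i ∈ {1,…,r+1}, the lr elements {α_{i,m} − α_{i,w_i} : i ∈ {1,…,l}, m ∈ {1,…,r+1}, m ≠ w_i} are linearly independent over F_q. -/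
/-- If the elements `α i j - α i (r+1)` for `i ∈ [1,l]`, `j ∈ [1,r]` are linearly independent
over `F_q`, then for every choice `w : i ↦ wᵢ ∈ [1,r+1]` the elements
`α i m - α i wᵢ` for `i ∈ [1,l]`, `m ∈ [1,r+1] \ {wᵢ}` are linearly independent over `F_q`. -/
theorem stmt_11 {K L : Type*} [Field K] [Fintype K] [Field L] [Fintype L] [Algebra K L]
    {l r : ℕ} (hl : 1 ≤ l) (hr : 1 ≤ r)
    (α : Fin l → Fin (r + 1) → L)
    (hind : LinearIndependent K
      (fun p : Fin l × Fin r => α p.1 p.2.castSucc - α p.1 (Fin.last r)))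
    (w : Fin l → Fin (r + 1)) :
    LinearIndependent K
      (fun p : (i : Fin l) × {m : Fin (r + 1) // m ≠ w i} =>
        α p.1 p.2.val - α p.1 (w p.1)) := by
  classical
  rw [Fintype.linearIndependent_iff] at hind ⊢
  intro c hc
  let e : Fin l → Fin (r + 1) → K := fun i m => if h : m ≠ w i then c ⟨i, m, h⟩ else 0
  let d : Fin l → Fin (r + 1) → K := fun i m => e i m - if m = w i then ∑ k, e i k else 0
  have hd0 : ∀ i, ∑ m, d i m = 0 := by
    intro i
    simp [d, Finset.sum_sub_distrib]
  have hinner : ∀ i, ∑ m : {m : Fin (r + 1) // m ≠ w i}, c ⟨i, m⟩ • (α i m.val - α i (w i))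
      = ∑ m, d i m • α i m := by
    intro i
    have h1 : ∑ m, d i m • α i m = ∑ m, e i m • (α i m - α i (w i)) := by
      simp [d, sub_smul, smul_sub, Finset.sum_sub_distrib, ite_smul, Finset.sum_smul]
    rw [h1]
    have h2 : ∀ m : {m : Fin (r + 1) // m ≠ w i}, c ⟨i, m⟩ • (α i m.val - α i (w i))
        = e i m.val • (α i m.val - α i (w i)) := by
      intro m
      simp [e, m.2]
    rw [Finset.sum_congr rfl (fun m _ => h2 m)]
    rw [← Finset.sum_subtype (Finset.univ.filter (fun m => m ≠ w i)) (by simp)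
      (fun m => e i m • (α i m - α i (w i)))]
    apply Finset.sum_subset (Finset.subset_univ _)
    intro m _ hm
    have hm' : m = w i := by simpa using hm
    simp [hm']
  have hlast : ∀ i, ∑ m, d i m • α i m
      = ∑ j : Fin r, d i j.castSucc • (α i j.castSucc - α i (Fin.last r)) := by
    intro i
    have h := hd0 i
    rw [Fin.sum_univ_castSucc] at h
    rw [Fin.sum_univ_castSucc, eq_neg_of_add_eq_zero_right h]
    simp [Finset.sum_add_distrib, Finset.sum_smul, sub_eq_add_neg]
  have hz := hind (fun p => d p.1 p.2.castSucc) (by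
    rw [Fintype.sum_prod_type, ← hc, Fintype.sum_sigma]
    exact Finset.sum_congr rfl fun i _ => ((hinner i).trans (hlast i)).symm)
  have hall : ∀ i m, d i m = 0 := by
    intro i m
    refine Fin.lastCases ?_ (fun j => hz (i, j)) m
    have h := hd0 i
    rw [Fin.sum_univ_castSucc, Finset.sum_eq_zero (fun j _ => hz (i, j)), zero_add] at h
    exact h
  rintro ⟨i, m, hm⟩
  have h := hall i m
  simpa [d, e, hm] using h
end

section
/- Let q be a prime power, F_{q^m} an extension field of F_q, and let l ≥ 1, r ≥ 1, s ≥ 0. Set n = l(r+1) and k = n − l − s − 1, and assume k ≥ 1. Let α_{i,j} ∈ F_{q^m} for i ∈ {1,…,l}, j ∈ {1,…,r+1}, and suppose the elements {α_{i,j} − α_{i,r+1} : i ∈ {1,…,l}, j ∈ {1,…,r}} are linearly independent over F_q. Let H be the (l+s+1)×n matrix over F_{q^m} whose columns are indexed by pairs (i,j) with i ∈ {1,…,l}, j ∈ {1,…,r+1}, such that for i' ∈ {1,…,l} the entry of row i' in column (i,j) equals 1 if i = i' and 0 otherwise, and for e ∈ {0,1,…,s} the entry of row l+1+e in column (i,j)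 equals α_{i,j}^{q^e}. Then any n − k − ⌈k/r⌉ + 1 columns of H are linearly independent over F_{q^m}. -/
theorem moore_aux {K L : Type*} [Field K] [Fintype K] [Field L] [Algebra K L]
    {m : ℕ} (x : Fin m → L) (hx : LinearIndependent K x) (c : Fin m → L)
    (hc : ∀ e : Fin m, ∑ p, c p * x p ^ Fintype.card K ^ (e : ℕ) = 0) : c = 0 := by
  classical
  by_contra hne
  have hq : 1 < Fintype.card K := Fintype.one_lt_card
  let M : Matrix (Fin m) (Fin m) L := fun p e => x p ^ Fintype.card K ^ (e : ℕ)
  have hdet : M.det = 0 := by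
    apply Matrix.exists_vecMul_eq_zero_iff.1
    refine ⟨c, hne, ?_⟩
    ext e
    exact hc e
  obtain ⟨v, hv0, hv⟩ := Matrix.exists_mulVec_eq_zero_iff.2 hdet
  let P : Polynomial L := ∑ e : Fin m, Polynomial.monomial (Fintype.card K ^ (e : ℕ)) (v e)
  have hfrob : ∀ (e : ℕ) (a : Fin m → K),
      (∑ i, a i • x i) ^ Fintype.card K ^ e = ∑ i, a i • x i ^ Fintype.card K ^ e := by
    intro e a
    induction e with
    | zero => simp
    | succ e ih =>
      simp only [pow_succ, pow_mul, ih]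
      have h := map_sum (FiniteField.frobeniusAlgHom K L)
        (fun i => a i • x i ^ Fintype.card K ^ e) Finset.univ
      simp only [map_smul, FiniteField.coe_frobeniusAlgHom] at h
      exact h
  have hP0 : P = 0 := by
    refine Polynomial.eq_zero_of_natDegree_lt_card_of_eval_eq_zero P
      (f := fun a : Fin m → K => ∑ i, a i • x i) ?_ ?_ ?_
    · intro a b hab
      have h := Fintype.linearIndependent_iff.1 hx (fun i => a i - b i) (by
        simp only [sub_smul, Finset.sum_sub_distrib]
        exact sub_eq_zero.2 hab)
      ext i
      exact sub_eq_zero.1 (h i)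
    · intro a
      simp only [P, Polynomial.eval_finsetSum, Polynomial.eval_monomial, hfrob]
      simp only [Finset.mul_sum]
      rw [Finset.sum_comm]
      apply Finset.sum_eq_zero
      intro i _
      have := congrFun hv i
      simp only [Matrix.mulVec, dotProduct, M, Pi.zero_apply] at this
      rw [← smul_zero (a i), ← this, Finset.smul_sum]
      refine Finset.sum_congr rfl fun e _ => ?_
      rw [mul_smul_comm, mul_comm]
    · rw [Fintype.card_fun, Fintype.card_fin]
      have hpos : 0 < Fintype.card K ^ m := by positivity
      rw [← Nat.le_sub_one_iff_lt hpos]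
      apply Polynomial.natDegree_sum_le_of_forall_le
      intro e _
      refine (Polynomial.natDegree_monomial_le _).trans ?_
      rw [Nat.le_sub_one_iff_lt hpos]
      exact Nat.pow_lt_pow_right hq e.2
  apply hv0
  ext e
  have h := congrArg (fun Q => Polynomial.coeff Q (Fintype.card K ^ (e : ℕ))) hP0
  simp only [P, Polynomial.finsetSum_coeff, Polynomial.coeff_monomial, Polynomial.coeff_zero] at h
  rw [Finset.sum_eq_single e] at h
  · simpa using h
  · intro b _ hb
    rw [if_neg]
    intro h'
    exact hb (Fin.ext (Nat.pow_right_injective hq h'))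
  · simp

theorem moore_ind {K L ι : Type*} [Field K] [Fintype K] [Field L] [Algebra K L] [Fintype ι]
    {N : ℕ} (hN : Fintype.card ι ≤ N) (x : ι → L) (hx : LinearIndependent K x) (c : ι → L)
    (hc : ∀ e : Fin N, ∑ p, c p * x p ^ Fintype.card K ^ (e : ℕ) = 0) : c = 0 := by
  let f := (Fintype.equivFin ι).symm
  have := moore_aux (x ∘ f) (hx.comp f f.injective) (c ∘ f) (fun e => by
    rw [← hc ⟨e, e.2.trans_le hN⟩]
    exact f.sum_comp (fun p => c p * x p ^ Fintype.card K ^ (e : ℕ)))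
  ext p
  simpa using congrFun this (f.symm p)

theorem diff_aux {K L : Type*} [Field K] [Field L] [Algebra K L] {l r : ℕ}
    (α : Fin l → Fin (r + 1) → L)
    (hind : LinearIndependent K
      (fun p : Fin l × Fin r => α p.1 p.2.castSucc - α p.1 (Fin.last r)))
    (a : Fin l → Fin (r + 1) → K) (ha : ∀ i, ∑ j, a i j = 0)
    (h : ∑ i, ∑ j, a i j • α i j = 0) : ∀ i j, a i j = 0 := by
  have h1 : ∀ i, ∑ j, a i j • α i j
      = ∑ j : Fin r, a i j.castSucc • (α i j.castSucc - α i (Fin.last r)) := by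
    intro i
    have h2 := ha i
    rw [Fin.sum_univ_castSucc] at h2 ⊢
    rw [eq_neg_of_add_eq_zero_right h2]
    simp only [smul_sub, Finset.sum_sub_distrib, neg_smul, Finset.sum_smul]
    ring
  simp only [h1] at h
  rw [← Fintype.sum_prod_type'
    (f := fun i (j : Fin r) => a i j.castSucc • (α i j.castSucc - α i (Fin.last r)))] at h
  have h3 := Fintype.linearIndependent_iff.1 hind (fun p => a p.1 p.2.castSucc) h
  intro i j
  have h2 := ha i
  rw [Fin.sum_univ_castSucc, Finset.sum_eq_zero (fun j _ => h3 (i, j)), zero_add] at h2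
  refine Fin.lastCases h2 (fun j => h3 (i, j)) j

theorem diff_ind {K L : Type*} [Field K] [Field L] [Algebra K L] {l r : ℕ}
    (α : Fin l → Fin (r + 1) → L)
    (hind : LinearIndependent K
      (fun p : Fin l × Fin r => α p.1 p.2.castSucc - α p.1 (Fin.last r)))
    (b : Fin l → Fin (r + 1)) (T : Finset (Fin l × Fin (r + 1)))
    (hT : ∀ p ∈ T, p.2 ≠ b p.1) :
    LinearIndependent K (fun p : {x // x ∈ T} => α p.1.1 p.1.2 - α p.1.1 (b p.1.1)) := by
  classical
  rw [Fintype.linearIndependent_iff]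
  intro g hg
  let G : Fin l × Fin (r + 1) → K := fun p => if h : p ∈ T then g ⟨p, h⟩ else 0
  have hG : ∀ p : {x // x ∈ T}, G p.1 = g p := fun p => by simp [G]
  have hsum : ∑ i, ∑ j, G (i, j) • (α i j - α i (b i)) = 0 := by
    rw [← Fintype.sum_prod_type (f := fun p => G p • (α p.1 p.2 - α p.1 (b p.1)))]
    rw [← hg, ← Finset.sum_subset (Finset.subset_univ T), ← Finset.sum_coe_sort]
    · exact Finset.sum_congr rfl fun p _ => by rw [hG]
    · intro p _ hp
      simp [G, hp]
  have key := diff_aux α hind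
    (fun i j => G (i, j) - if j = b i then ∑ j', G (i, j') else 0)
    (fun i => by simp) (by
      rw [← hsum]
      refine Finset.sum_congr rfl fun i _ => ?_
      simp [sub_smul, smul_sub, Finset.sum_sub_distrib, Finset.sum_smul, ite_smul])
  intro p
  have := key p.1.1 p.1.2
  rw [if_neg (hT p.1 p.2), sub_zero] at this
  rw [← hG]
  exact this

/-- Construction 1 (Lemma: distance property): any `n - k - ⌈k/r⌉ + 1` columns of the
parity-check matrix `H` built from locality rows and Moore-type rows of linearly
independent differences are linearly independent. -/
theorem stmt_12 {K L : Type*} [Field K] [Fintype K] [Field L] [Fintype L] [Algebra K L]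
    {l r s n k : ℕ} (hl : 1 ≤ l) (hr : 1 ≤ r)
    (hn : n = l * (r + 1)) (hk : k + (l + s + 1) = n) (hk1 : 1 ≤ k)
    (α : Fin l → Fin (r + 1) → L)
    (hind : LinearIndependent K
      (fun p : Fin l × Fin r => α p.1 p.2.castSucc - α p.1 (Fin.last r)))
    (H : Matrix (Fin l ⊕ Fin (s + 1)) (Fin l × Fin (r + 1)) L)
    (hH1 : ∀ (i' : Fin l) (p : Fin l × Fin (r + 1)),
      H (Sum.inl i') p = if p.1 = i' then 1 else 0)
    (hH2 : ∀ (e : Fin (s + 1)) (p : Fin l × Fin (r + 1)),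
      H (Sum.inr e) p = α p.1 p.2 ^ Fintype.card K ^ (e : ℕ))
    (S : Finset (Fin l × Fin (r + 1)))
    (hS : (S.card : ℤ) = (n : ℤ) - k - ⌈(k : ℚ) / r⌉ + 1) :
    LinearIndependent L (fun p : {x // x ∈ S} => fun row => H row p.val) := by
  classical
  rw [Fintype.linearIndependent_iff]
  intro g hg
  -- the coefficients, extended by zero
  let G : Fin l × Fin (r + 1) → L := fun p => if h : p ∈ S then g ⟨p, h⟩ else 0
  have hG : ∀ p : {x // x ∈ S}, G p.1 = g p := fun p => by simp [G]
  have hG0 : ∀ p, p ∉ S → G p = 0 := fun p hp => by simp [G, hp]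
  have hrow : ∀ row, ∑ p, G p * H row p = 0 := by
    intro row
    have h := congrFun hg row
    simp only [Finset.sum_apply, Pi.smul_apply, smul_eq_mul, Pi.zero_apply] at h
    rw [← h, ← Finset.sum_subset (Finset.subset_univ S), ← Finset.sum_coe_sort]
    · exact Finset.sum_congr rfl fun p _ => by rw [hG]
    · intro p _ hp
      simp [hG0 p hp]
  have hloc : ∀ i, ∑ j, G (i, j) = 0 := by
    intro i
    have h := hrow (Sum.inl i)
    simp only [hH1] at h
    rw [Fintype.sum_prod_type, Finset.sum_eq_single i] at h
    · simpa using h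
    · intro b _ hb
      simp [hb]
    · simp
  obtain ⟨b, hb⟩ : ∃ b : Fin l → Fin (r + 1), ∀ i j, (i, j) ∈ S → (i, b i) ∈ S := by
    have : ∀ i, ∃ b : Fin (r + 1), ∀ j, (i, j) ∈ S → (i, b) ∈ S := by
      intro i
      by_cases h : ∃ j, (i, j) ∈ S
      · exact ⟨h.choose, fun _ _ => h.choose_spec⟩
      · exact ⟨0, fun j hj => absurd ⟨j, hj⟩ h⟩
    choose b hb using this
    exact ⟨b, hb⟩
  let T := S.filter (fun p => p.2 ≠ b p.1)
  let I := S.image Prod.fst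
  have hcard : T.card + I.card = S.card := by
    rw [add_comm, ← Finset.card_filter_add_card_filter_not (s := S) (fun p => p.2 = b p.1)]
    congr 1
    apply Finset.card_bij (fun i _ => (i, b i))
    · intro i hi
      obtain ⟨p, hp, rfl⟩ := Finset.mem_image.1 hi
      exact Finset.mem_filter.2 ⟨hb p.1 p.2 hp, rfl⟩
    · intro i _ j _ h
      exact congrArg Prod.fst h
    · intro p hp
      obtain ⟨hp, h⟩ := Finset.mem_filter.1 hp
      exact ⟨p.1, Finset.mem_image_of_mem _ hp, by rw [← h]⟩
  have hle : S.card ≤ I.card * (r + 1) := by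
    have : S ⊆ I ×ˢ Finset.univ := fun p hp =>
      Finset.mem_product.2 ⟨Finset.mem_image_of_mem _ hp, Finset.mem_univ _⟩
    simpa [Finset.card_product] using Finset.card_le_card this
  have hTs : T.card ≤ s + 1 := by
    by_contra hcon
    push Not at hcon
    have hrQ : (0 : ℚ) < r := by exact_mod_cast hr
    set c := ⌈(k : ℚ) / r⌉ with hc
    have h1 : (k : ℤ) ≤ c * r := by
      have := Int.le_ceil ((k : ℚ) / r)
      rw [← hc, div_le_iff₀ hrQ] at this
      clear_value c
      exact_mod_cast this
    have h2 : c * r < k + r := by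
      have := Int.ceil_lt_add_one ((k : ℚ) / r)
      rw [← hc, ← sub_lt_iff_lt_add, lt_div_iff₀ hrQ] at this
      have h3 : ((c : ℚ)) * r < k + r := by linarith
      exact_mod_cast h3
    -- |S| = l+s+2-c, |I| ≤ l - c
    have hS' : (S.card : ℤ) = l + s + 2 - c := by rw [hS, ← hk]; push_cast; ring
    have hI : (I.card : ℤ) ≤ l - c := by omega
    have h4 : (S.card : ℤ) ≤ (l - c) * (r + 1) := by
      have : (S.card : ℤ) ≤ I.card * (r + 1) := by exact_mod_cast hle
      nlinarith
    have h5 : (k : ℤ) + (l + s + 1) = l * (r + 1) := by exact_mod_cast hk.trans hn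
    nlinarith
  have hdi := diff_ind α hind b T (fun p hp => (Finset.mem_filter.1 hp).2)
  have hTz := moore_ind (N := s + 1) (by simpa using hTs) _ hdi (fun p => G p.1) (by
    intro e
    have h := hrow (Sum.inr e)
    simp only [hH2] at h
    have hsub : ∀ y z : L, (y - z) ^ Fintype.card K ^ (e : ℕ)
        = y ^ Fintype.card K ^ (e : ℕ) - z ^ Fintype.card K ^ (e : ℕ) := by
      intro y z
      generalize (e : ℕ) = e
      induction e with
      | zero => simp
      | succ e ih =>
        simp only [pow_succ, pow_mul, ih]
        simpa using map_sub (FiniteField.frobeniusAlgHom K L)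
          (y ^ Fintype.card K ^ e) (z ^ Fintype.card K ^ e)
    rw [Finset.sum_coe_sort T (fun p => G p * (α p.1 p.2 - α p.1 (b p.1)) ^ Fintype.card K ^ (e : ℕ)),
      Finset.sum_subset (Finset.subset_univ T)]
    · simp only [hsub, mul_sub, Finset.sum_sub_distrib, h]
      rw [Fintype.sum_prod_type]
      simp [← Finset.sum_mul, hloc]
    · intro p _ hp
      by_cases hpS : p ∈ S
      · have : p.2 = b p.1 := by
          by_contra h'
          exact hp (Finset.mem_filter.2 ⟨hpS, h'⟩)
        rw [this, sub_self, zero_pow (by positivity), mul_zero]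
      · rw [hG0 p hpS, zero_mul])
  have hne : ∀ p, p.2 ≠ b p.1 → G p = 0 := by
    intro p hp
    by_cases hpS : p ∈ S
    · exact congrFun hTz ⟨p, Finset.mem_filter.2 ⟨hpS, hp⟩⟩
    · exact hG0 p hpS
  intro p
  rw [← hG]
  by_cases hp : p.1.2 = b p.1.1
  · have h := hloc p.1.1
    rw [Finset.sum_eq_single p.1.2] at h
    · exact h
    · intro j _ hj
      exact hne (p.1.1, j) (by rw [← hp]; exact hj)
    · simp
  · exact hne _ hp
end

section
/- Let q be a prime power, F_{q^m} an extension field of F_q, and let l ≥ 1, r ≥ 1, s ≥ 0. Set n = l(r+1) and k = n − l − s − 1, and assume k ≥ 1. Let α_{i,j} ∈ F_{q^m} for i ∈ {1,…,l}, j ∈ {1,…,r+1}, and suppose the elements {α_{i,j} − α_{i,r+1} : i ∈ {1,…,l}, j ∈ {1,…,r}} are linearly independent over F_q. Let H be the (l+s+1)×n matrix over F_{q^m} whose columns are indexed by pairs (i,j), such that for i' ∈ {1,…,l} the entry of row i' in column (i,j) equals 1 if i = i' and 0 otherwise, and for e ∈ {0,1,…,s} the entry of row l+1+e in column (i,j)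 equals α_{i,j}^{q^e}. Then H has full row rank l+s+1; equivalently, the linear code {x ∈ F_{q^m}^n : Hx = 0} has dimension k. -/
/-- Construction 1 (Lemma: dimension property): the parity-check matrix `H` built from
locality rows and Moore-type rows has full row rank `l + s + 1`; equivalently, the linear
code `{x : Hx = 0}` has dimension `k = n - l - s - 1`. -/
theorem stmt_13 {K L : Type*} [Field K] [Fintype K] [Field L] [Fintype L] [Algebra K L]
    {l r s n k : ℕ} (hl : 1 ≤ l) (hr : 1 ≤ r)
    (hn : n = l * (r + 1)) (hk : k + (l + s + 1) = n) (hk1 : 1 ≤ k)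
    (α : Fin l → Fin (r + 1) → L)
    (hind : LinearIndependent K
      (fun p : Fin l × Fin r => α p.1 p.2.castSucc - α p.1 (Fin.last r)))
    (H : Matrix (Fin l ⊕ Fin (s + 1)) (Fin l × Fin (r + 1)) L)
    (hH1 : ∀ (i' : Fin l) (p : Fin l × Fin (r + 1)),
      H (Sum.inl i') p = if p.1 = i' then 1 else 0)
    (hH2 : ∀ (e : Fin (s + 1)) (p : Fin l × Fin (r + 1)),
      H (Sum.inr e) p = α p.1 p.2 ^ Fintype.card K ^ (e : ℕ)) :
    H.rank = l + s + 1 ∧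
    Module.finrank L (LinearMap.ker H.mulVecLin) = k := by
  classical
  have hq : 1 < Fintype.card K := Fintype.one_lt_card
  have hrows : LinearIndependent L H.row := by
    rw [Fintype.linearIndependent_iff]
    intro g hg
    have key : ∀ p : Fin l × Fin (r + 1),
        g (Sum.inl p.1) + ∑ e : Fin (s + 1),
          g (Sum.inr e) * α p.1 p.2 ^ Fintype.card K ^ (e : ℕ) = 0 := by
      intro p
      have := congrFun hg p
      simpa [Fintype.sum_sum_type, Finset.sum_apply, Matrix.row, hH1, hH2] using this
    let f : L →ₗ[K] L := ∑ e : Fin (s + 1),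
      g (Sum.inr e) • ((FiniteField.frobeniusAlgHom K L) ^ (e : ℕ)).toLinearMap
    have hfrob : ∀ (e : ℕ) (x : L),
        ((FiniteField.frobeniusAlgHom K L) ^ e) x = x ^ Fintype.card K ^ e := by
      intro e
      induction e with
      | zero => intro x; simp
      | succ e ih =>
        intro x
        rw [pow_succ, AlgHom.mul_apply, ih, FiniteField.frobeniusAlgHom_apply, ← pow_mul,
          pow_succ']
    have hf : ∀ x, f x = ∑ e : Fin (s + 1),
        g (Sum.inr e) * x ^ Fintype.card K ^ (e : ℕ) := by
      intro x
      simp [f, LinearMap.sum_apply, hfrob]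
    have hf0 : ∀ p : Fin l × Fin r,
        f (α p.1 p.2.castSucc - α p.1 (Fin.last r)) = 0 := by
      intro p
      have h1 := key (p.1, p.2.castSucc)
      have h2 := key (p.1, Fin.last r)
      rw [map_sub, hf, hf]
      linear_combination h1 - h2
    let P : Polynomial L := ∑ e : Fin (s + 1),
      Polynomial.C (g (Sum.inr e)) * Polynomial.X ^ Fintype.card K ^ (e : ℕ)
    have hPdeg : P.natDegree ≤ Fintype.card K ^ s := by
      apply Polynomial.natDegree_sum_le_of_forall_le
      intro e _
      refine (Polynomial.natDegree_C_mul_X_pow_le _ _).trans ?_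
      exact Nat.pow_le_pow_right hq.le (by omega)
    have hlt : s < l * r := by
      have : l * (r + 1) = l * r + l := by ring
      omega
    have hP : P = 0 := by
      refine Polynomial.eq_zero_of_natDegree_lt_card_of_eval_eq_zero P
        (f := Fintype.linearCombination K
          (fun p : Fin l × Fin r => α p.1 p.2.castSucc - α p.1 (Fin.last r))) ?_ ?_ ?_
      · exact hind.fintypeLinearCombination_injective
      · intro c
        have : P.eval (Fintype.linearCombination K
          (fun p : Fin l × Fin r => α p.1 p.2.castSucc - α p.1 (Fin.last r)) c)
          = f (Fintype.linearCombination K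
          (fun p : Fin l × Fin r => α p.1 p.2.castSucc - α p.1 (Fin.last r)) c) := by
          rw [hf]
          simp [P, Polynomial.eval_finsetSum]
        rw [this, Fintype.linearCombination_apply, map_sum]
        exact Finset.sum_eq_zero fun p _ => by rw [map_smul, hf0, smul_zero]
      · refine hPdeg.trans_lt ?_
        simpa using Nat.pow_lt_pow_right hq hlt
    have hd : ∀ e, g (Sum.inr e) = 0 := by
      intro e
      have h := congrArg (fun Q => Polynomial.coeff Q (Fintype.card K ^ (e : ℕ))) hP
      simp only [P, Polynomial.finsetSum_coeff, Polynomial.coeff_C_mul, Polynomial.coeff_X_pow,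
        Polynomial.coeff_zero] at h
      rw [Finset.sum_eq_single e] at h
      · simpa using h
      · intro b _ hb
        rw [if_neg, mul_zero]
        intro h'
        exact hb (Fin.ext (Nat.pow_right_injective hq h').symm)
      · simp
    rintro (i | e)
    · have := key (i, Fin.last r)
      simpa [hd] using this
    · exact hd e
  have hrank : H.rank = l + s + 1 := by
    rw [hrows.rank_matrix]
    simp [add_assoc]
  refine ⟨hrank, ?_⟩
  have h := LinearMap.finrank_range_add_finrank_ker H.mulVecLin
  have h' : Module.finrank L (LinearMap.range H.mulVecLin) = l + s + 1 := hrank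
  rw [h', Module.finrank_fintype_fun_eq_card] at h
  simp only [Fintype.card_prod, Fintype.card_fin] at h
  omega
end

section
/- (Construction 1 is optimal) Let q be a prime power, F_{q^m} an extension field of F_q, and let l ≥ 1, r ≥ 1, s ≥ 0. Set n = l(r+1) and k = n − l − s − 1, and assume k ≥ 1. Let α_{i,j} ∈ F_{q^m} for i ∈ {1,…,l}, j ∈ {1,…,r+1}, and suppose the elements {α_{i,j} − α_{i,r+1} : i ∈ {1,…,l}, j ∈ {1,…,r}} are linearly independent over F_q. Let H be the (l+s+1)×n matrix over F_{q^m} whose columns are indexed by pairs (i,j), such that for i' ∈ {1,…,l} the entry of row i' in column (i,j) equals 1 if i = i' and 0 otherwise, and for e ∈ {0,1,…,s} the entry of row l+1+e in column (i,j) equals α_{i,j}^{q^e}. Then the linear code C = {x ∈ F_{q^m}^n : Hx = 0} has dimension k, every coordinate of C has locality r, and the minimum distance of C equals n − k − ⌈k/r⌉ + 2 (so C meets the Singleton-like bound with equality). -/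
open Finset in
theorem aux_frob (K L : Type*) [Field K] [Fintype K] [Field L] [Algebra K L] (e : ℕ) :
    ∃ f : L →ₐ[K] L, ∀ x, f x = x ^ Fintype.card K ^ e := by
  induction e with
  | zero => exact ⟨AlgHom.id K L, by simp⟩
  | succ e ih =>
    obtain ⟨f, hf⟩ := ih
    refine ⟨(FiniteField.frobeniusAlgHom K L).comp f, fun x => ?_⟩
    simp [hf, FiniteField.coe_frobeniusAlgHom, pow_succ, pow_mul]

/-- Independent points: a linearized polynomial of small degree vanishing there is zero. -/
theorem aux_moore {K L ι : Type*} [Field K] [Fintype K] [Field L] [Algebra K L]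
    [Fintype ι] (β : ι → L) (hβ : LinearIndependent K β) (N : ℕ) (hN : N ≤ Fintype.card ι)
    (c : Fin N → L) (h : ∀ i, ∑ e, c e * β i ^ Fintype.card K ^ (e : ℕ) = 0) : c = 0 := by
  classical
  have hq : 1 < Fintype.card K := Fintype.one_lt_card
  set q := Fintype.card K with hqd
  let P : Polynomial L := ∑ e : Fin N, Polynomial.monomial (q ^ (e : ℕ)) (c e)
  have hP : P = 0 := by
    refine Polynomial.eq_zero_of_natDegree_lt_card_of_eval_eq_zero P
      (f := fun a : ι → K => ∑ i, a i • β i) ?_ ?_ ?_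
    · exact hβ.fintypeLinearCombination_injective
    · intro a
      simp only [P, Polynomial.eval_finsetSum, Polynomial.eval_monomial]
      have : ∀ e : Fin N, c e * (∑ i, a i • β i) ^ q ^ (e : ℕ)
          = ∑ i, a i • (c e * β i ^ q ^ (e : ℕ)) := by
        intro e
        obtain ⟨f, hf⟩ := aux_frob K L (e : ℕ)
        rw [← hf, map_sum, Finset.mul_sum]
        refine Finset.sum_congr rfl fun i _ => ?_
        rw [map_smul, hf, mul_smul_comm]
      simp_rw [this]
      rw [Finset.sum_comm]
      refine Finset.sum_eq_zero fun i _ => ?_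
      rw [← Finset.smul_sum, h i, smul_zero]
    · have h1 : Fintype.card (ι → K) = q ^ Fintype.card ι := by simp [hqd]
      rw [h1]
      refine lt_of_le_of_lt (b := q ^ Fintype.card ι - 1) ?_
        (Nat.sub_lt (Nat.pow_pos (by omega)) one_pos)
      refine Polynomial.natDegree_sum_le_of_forall_le _ _ fun e _ => ?_
      refine (Polynomial.natDegree_monomial_le _).trans ?_
      have : q ^ (e : ℕ) < q ^ Fintype.card ι := Nat.pow_lt_pow_right hq (by omega)
      omega
  funext e
  have h2 : P.coeff (q ^ (e : ℕ)) = 0 := by rw [hP]; simp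
  simp only [P, Polynomial.finsetSum_coeff, Polynomial.coeff_monomial] at h2
  rw [Finset.sum_eq_single e] at h2
  · simpa using h2
  · intro b _ hb
    rw [if_neg]
    intro hh
    exact hb (Fin.ext (Nat.pow_right_injective hq hh))
  · simp

theorem aux_moore' {K L ι : Type*} [Field K] [Fintype K] [Field L] [Algebra K L]
    [Fintype ι] (β : ι → L) (hβ : LinearIndependent K β) (N : ℕ) (hN : Fintype.card ι ≤ N)
    (y : ι → L) (h : ∀ e < N, ∑ i, y i * β i ^ Fintype.card K ^ e = 0) : y = 0 := by
  classical
  let E := Fintype.equivFin ι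
  let M : Matrix ι ι L := fun a i => β i ^ Fintype.card K ^ (E a : ℕ)
  have hdet : M.det ≠ 0 := by
    intro h0
    obtain ⟨v, hv, hv0⟩ := Matrix.exists_vecMul_eq_zero_iff.2 h0
    apply hv
    have := aux_moore β hβ (Fintype.card ι) le_rfl (fun e => v (E.symm e)) (fun i => by
      have := congrFun hv0 i
      simp only [Matrix.vecMul, dotProduct, M, Pi.zero_apply] at this
      rw [← this]
      rw [← E.sum_comp]
      simp)
    funext a
    simpa using congrFun this (E a)
  refine Matrix.eq_zero_of_mulVec_eq_zero hdet ?_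
  funext a
  simp only [Matrix.mulVec, dotProduct, M, Pi.zero_apply]
  rw [← h (E a) (by have := (E a).2; omega)]
  exact Finset.sum_congr rfl fun i _ => mul_comm _ _

/-- Group-sum-zero relations among the `α` are trivial. -/
theorem aux_rel {K L : Type*} [Field K] [Field L] [Algebra K L] {l r : ℕ}
    (α : Fin l → Fin (r + 1) → L)
    (hind : LinearIndependent K
      (fun p : Fin l × Fin r => α p.1 p.2.castSucc - α p.1 (Fin.last r)))
    (a : Fin l → Fin (r + 1) → K) (ha : ∀ i, ∑ j, a i j = 0)
    (h : ∑ i, ∑ j, a i j • α i j = 0) : a = 0 := by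
  rw [Fintype.linearIndependent_iff] at hind
  have hl : ∀ i, a i (Fin.last r) = - ∑ j : Fin r, a i j.castSucc := by
    intro i
    have := ha i
    rw [Fin.sum_univ_castSucc] at this
    exact eq_neg_of_add_eq_zero_right this
  have h0 := hind (fun p => a p.1 p.2.castSucc) (by
    rw [Fintype.sum_prod_type, ← h]
    refine Finset.sum_congr rfl fun i _ => ?_
    rw [Fin.sum_univ_castSucc, hl]
    simp only [smul_sub, Finset.sum_sub_distrib, neg_smul, Finset.sum_smul]
    abel)
  funext i j
  refine Fin.lastCases ?_ (fun j => h0 (i, j)) j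
  rw [hl]
  simp [fun j => h0 (i, j)]

theorem aux_ind {K L : Type*} [Field K] [Field L] [Algebra K L] {l r : ℕ}
    (α : Fin l → Fin (r + 1) → L)
    (hind : LinearIndependent K
      (fun p : Fin l × Fin r => α p.1 p.2.castSucc - α p.1 (Fin.last r)))
    (b : Fin l → Fin (r + 1)) :
    LinearIndependent K (fun p : {p : Fin l × Fin (r + 1) // p.2 ≠ b p.1} =>
      α p.1.1 p.1.2 - α p.1.1 (b p.1.1)) := by
  classical
  rw [Fintype.linearIndependent_iff]
  intro g hg
  let G : Fin l → Fin (r + 1) → K := fun i j => if h : j ≠ b i then g ⟨(i, j), h⟩ else 0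
  let a : Fin l → Fin (r + 1) → K := fun i j => G i j - if j = b i then ∑ j', G i j' else 0
  have ha : a = 0 := by
    refine aux_rel α hind a (fun i => by simp [a]) ?_
    have e1 : ∀ i, ∑ j, a i j • α i j = ∑ j, G i j • (α i j - α i (b i)) := by
      intro i
      simp [a, sub_smul, smul_sub, ite_smul, Finset.sum_smul]
    simp_rw [e1]
    rw [← hg, ← Fintype.sum_prod_type' (f := fun i j => G i j • (α i j - α i (b i)))]
    symm
    refine Fintype.sum_of_injective Subtype.val Subtype.val_injective _ _ ?_ ?_
    · rintro ⟨i, j⟩ hp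
      have : j = b i := by simpa using hp
      simp [this]
    · rintro ⟨⟨i, j⟩, hp⟩
      simp only at hp
      simp [G, hp]
  rintro ⟨⟨i, j⟩, hj⟩
  have := congrFun (congrFun ha i) j
  simp only at hj
  simpa [a, G, hj] using this

theorem aux_lower {K L : Type*} [Field K] [Fintype K] [Field L] [Algebra K L] [DecidableEq L]
    {l r s : ℕ} (hr : 1 ≤ r)
    (α : Fin l → Fin (r + 1) → L)
    (hind : LinearIndependent K
      (fun p : Fin l × Fin r => α p.1 p.2.castSucc - α p.1 (Fin.last r)))
    (c : Fin l × Fin (r + 1) → L) (hc : c ≠ 0) (h1 : ∀ i, ∑ j, c (i, j) = 0)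
    (h2 : ∀ e < s + 1, ∑ p, c p * α p.1 p.2 ^ Fintype.card K ^ e = 0) :
    s + 2 + ((s + 1) / r + 1) ≤ hammingNorm c := by
  classical
  have hb : ∀ i, ∃ j, (∃ j', c (i, j') ≠ 0) → c (i, j) ≠ 0 := by
    intro i
    by_cases h : ∃ j', c (i, j') ≠ 0
    · obtain ⟨j, hj⟩ := h
      exact ⟨j, fun _ => hj⟩
    · exact ⟨0, fun h' => absurd h' h⟩
  choose b hb using hb
  let A : Finset (Fin l × Fin (r + 1)) := Finset.univ.filter fun p => c p ≠ 0 ∧ p.2 ≠ b p.1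
  let T : Finset (Fin l) := Finset.univ.filter fun i => c (i, b i) ≠ 0
  have hw : hammingNorm c = A.card + T.card := by
    have hT : T.card = (Finset.univ.filter
        fun p : Fin l × Fin (r + 1) => c p ≠ 0 ∧ p.2 = b p.1).card := by
      refine Finset.card_bij (fun i _ => (i, b i)) ?_ ?_ ?_
      · intro i hi; simpa [T] using hi
      · intro i _ i' _ h; exact (Prod.ext_iff.1 h).1
      · rintro ⟨i, j⟩ h
        simp only [Finset.mem_filter, Finset.mem_univ, true_and] at h
        obtain ⟨h, rfl⟩ := h
        exact ⟨i, by simpa [T] using h, rfl⟩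
    rw [hT, hammingNorm, ← Finset.card_union_of_disjoint]
    · congr 1
      ext p
      simp only [A, Finset.mem_filter, Finset.mem_univ, true_and, Finset.mem_union]
      tauto
    · rw [Finset.disjoint_left]
      intro p hp hp'
      simp only [A, Finset.mem_filter, Finset.mem_univ, true_and] at hp hp'
      exact hp.2 hp'.2
  have hAT : A.card + T.card ≤ T.card * (r + 1) := by
    rw [← hw, hammingNorm]
    have : (T ×ˢ (Finset.univ : Finset (Fin (r + 1)))).card = T.card * (r + 1) := by simp
    rw [← this]
    refine Finset.card_le_card ?_
    rintro ⟨i, j⟩ h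
    simp only [Finset.mem_filter, Finset.mem_univ, true_and] at h
    simpa [T] using hb i ⟨j, h⟩
  have hN : s + 2 ≤ A.card := by
    by_contra hlt
    have hiA : LinearIndependent K (fun p : A => α p.1.1 p.1.2 - α p.1.1 (b p.1.1)) := by
      have := (aux_ind α hind b).comp
        (fun p : A => (⟨p.1, (Finset.mem_filter.1 p.2).2.2⟩ :
          {p : Fin l × Fin (r + 1) // p.2 ≠ b p.1}))
        (fun p p' h => Subtype.ext (congrArg (fun z => z.1) h))
      exact this
    have hz := aux_moore' (fun p : A => α p.1.1 p.1.2 - α p.1.1 (b p.1.1)) hiA (s + 1)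
      (by simp; omega) (fun p => c p.1) (fun e he => by
        obtain ⟨f, hf⟩ := aux_frob K L e
        rw [← h2 e he]
        have e1 : ∑ p : Fin l × Fin (r + 1), c p * α p.1 p.2 ^ Fintype.card K ^ e
            = ∑ p : Fin l × Fin (r + 1),
              c p * (α p.1 p.2 - α p.1 (b p.1)) ^ Fintype.card K ^ e := by
          simp_rw [← hf, map_sub, mul_sub]
          rw [Finset.sum_sub_distrib, eq_comm, sub_eq_self, Fintype.sum_prod_type]
          refine Finset.sum_eq_zero fun i _ => ?_
          simp only
          rw [← Finset.sum_mul, h1, zero_mul]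
        rw [e1]
        refine Fintype.sum_of_injective Subtype.val Subtype.val_injective _ _ ?_ (fun _ => rfl)
        rintro ⟨i, j⟩ hp
        have hp : ¬ (c (i, j) ≠ 0 ∧ j ≠ b i) := by simpa [A] using hp
        by_cases h : c (i, j) = 0
        · simp [h]
        · have : j = b i := by tauto
          rw [← hf]
          simp [this])
    have hoff : ∀ i j, j ≠ b i → c (i, j) = 0 := by
      intro i j hj
      by_contra h
      exact h (congrFun hz ⟨(i, j), by simp [A, h, hj]⟩)
    apply hc
    funext ⟨i, j⟩
    by_cases hj : j = b i
    · have := h1 i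
      rw [Finset.sum_eq_single (b i) (fun j _ hj => hoff i j hj) (by simp)] at this
      rw [hj, this]; rfl
    · exact hoff i j hj
  have hT : (s + 1) / r < T.card := by
    rw [Nat.div_lt_iff_lt_mul (by omega)]
    nlinarith
  omega

theorem aux_upper {K L : Type*} [Field K] [Fintype K] [Field L] [Algebra K L] [DecidableEq L]
    {l r s : ℕ} (hr : 1 ≤ r) (hs : s + 2 ≤ l * r)
    (α : Fin l → Fin (r + 1) → L) :
    ∃ c : Fin l × Fin (r + 1) → L, c ≠ 0 ∧ (∀ i, ∑ j, c (i, j) = 0) ∧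
      (∀ e < s + 1, ∑ p, c p * α p.1 p.2 ^ Fintype.card K ^ e = 0) ∧
      hammingNorm c ≤ s + 2 + ((s + 1) / r + 1) := by
  classical
  let E : Fin (s + 2) → Fin l × Fin r := fun x => finProdFinEquiv.symm (Fin.castLE hs x)
  have hE : Function.Injective E :=
    finProdFinEquiv.symm.injective.comp (Fin.castLE_injective hs)
  have hE1 : ∀ x, ((E x).1 : ℕ) = x / r := by intro x; rfl
  let M : Matrix (Fin (s + 1)) (Fin (s + 2)) L := fun e x =>
    α (E x).1 (E x).2.castSucc ^ Fintype.card K ^ (e : ℕ)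
      - α (E x).1 (Fin.last r) ^ Fintype.card K ^ (e : ℕ)
  have hker : LinearMap.ker M.mulVecLin ≠ ⊥ := by
    apply LinearMap.ker_ne_bot_of_finrank_lt
    simp
  obtain ⟨y, hy, hy0⟩ := (Submodule.ne_bot_iff _).1 hker
  have hy : ∀ e, ∑ x, M e x * y x = 0 := fun e => congrFun hy e
  let c : Fin l × Fin (r + 1) → L := fun p => ∑ x, y x *
    ((if p = ((E x).1, (E x).2.castSucc) then 1 else 0)
      - (if p = ((E x).1, Fin.last r) then 1 else 0))
  refine ⟨c, ?_, ?_, ?_, ?_⟩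
  · intro h
    apply hy0
    funext x
    have := congrFun h ((E x).1, (E x).2.castSucc)
    simp only [c, Pi.zero_apply] at this
    rw [Finset.sum_eq_single x] at this
    · simpa [Fin.castSucc_ne_last] using this
    · intro x' _ hx'
      have h1 : ¬ ((E x).1, (E x).2.castSucc) = ((E x').1, (E x').2.castSucc) := by
        intro hh
        simp only [Prod.mk.injEq, Fin.castSucc_inj] at hh
        exact hx' (hE (Prod.ext hh.1 hh.2)).symm
      simp [h1, Fin.castSucc_ne_last]
    · simp
  · intro i
    simp only [c]
    rw [Finset.sum_comm]
    refine Finset.sum_eq_zero fun x _ => ?_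
    rw [← Finset.mul_sum, Finset.sum_sub_distrib]
    by_cases h : i = (E x).1 <;> simp [h]
  · intro e he
    rw [← hy ⟨e, he⟩]
    simp only [c, Finset.sum_mul]
    rw [Finset.sum_comm]
    refine Finset.sum_congr rfl fun x _ => ?_
    simp only [mul_assoc, sub_mul, ← Finset.mul_sum, Finset.sum_sub_distrib, ite_mul, one_mul,
      zero_mul, Finset.sum_ite_eq', Finset.sum_ite_eq, Finset.mem_univ, if_true, M]
    rw [mul_comm]; simp [sub_mul]
  · let S1 : Finset (Fin l × Fin (r + 1)) :=
      Finset.univ.image fun x => ((E x).1, (E x).2.castSucc)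
    let S2 : Finset (Fin l × Fin (r + 1)) :=
      (Finset.univ.filter fun i : Fin l => (i : ℕ) < (s + 1) / r + 1).image
        fun i => (i, Fin.last r)
    have c1 : S1.card ≤ s + 2 := Finset.card_image_le.trans (by simp)
    have c2 : S2.card ≤ (s + 1) / r + 1 := by
      refine Finset.card_image_le.trans ?_
      have := Finset.card_le_card_of_injOn (t := Finset.range ((s + 1) / r + 1))
        (s := Finset.univ.filter fun i : Fin l => (i : ℕ) < (s + 1) / r + 1)
        (fun i => (i : ℕ)) (fun i hi => by simpa using hi) (Fin.val_injective.injOn)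
      simpa using this
    refine le_trans (le_trans (Finset.card_le_card (t := S1 ∪ S2) ?_)
      (Finset.card_union_le _ _)) (add_le_add c1 c2)
    intro p hp
    by_contra hn
    simp only [Finset.mem_filter, Finset.mem_univ, true_and] at hp
    apply hp
    refine Finset.sum_eq_zero fun x _ => ?_
    rw [Finset.mem_union, not_or] at hn
    rw [if_neg, if_neg, sub_zero, mul_zero]
    · rintro rfl
      apply hn.2
      refine Finset.mem_image.2 ⟨(E x).1, ?_, rfl⟩
      simp only [Finset.mem_filter, Finset.mem_univ, true_and, hE1]
      have : (x : ℕ) / r ≤ (s + 1) / r := Nat.div_le_div_right (by omega)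
      omega
    · rintro rfl
      exact hn.1 (Finset.mem_image.2 ⟨x, Finset.mem_univ _, rfl⟩)

theorem aux_ker {K L : Type*} [Field K] [Fintype K] [Field L] {l r s : ℕ}
    (α : Fin l → Fin (r + 1) → L)
    (H : Matrix (Fin l ⊕ Fin (s + 1)) (Fin l × Fin (r + 1)) L)
    (hH1 : ∀ (i' : Fin l) (p : Fin l × Fin (r + 1)),
      H (Sum.inl i') p = if p.1 = i' then 1 else 0)
    (hH2 : ∀ (e : Fin (s + 1)) (p : Fin l × Fin (r + 1)),
      H (Sum.inr e) p = α p.1 p.2 ^ Fintype.card K ^ (e : ℕ)) (c : Fin l × Fin (r + 1) → L) :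
    c ∈ LinearMap.ker H.mulVecLin ↔ (∀ i, ∑ j, c (i, j) = 0) ∧
      (∀ e < s + 1, ∑ p, c p * α p.1 p.2 ^ Fintype.card K ^ e = 0) := by
  have e1 : ∀ i, (H.mulVec c) (Sum.inl i) = ∑ j, c (i, j) := by
    intro i
    simp only [Matrix.mulVec, dotProduct, hH1, ite_mul, one_mul, zero_mul]
    rw [Fintype.sum_prod_type, Finset.sum_eq_single i]
    · simp
    · intro b _ hb; simp [hb]
    · simp
  have e2 : ∀ e : Fin (s + 1), (H.mulVec c) (Sum.inr e)
      = ∑ p, c p * α p.1 p.2 ^ Fintype.card K ^ (e : ℕ) := by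
    intro e
    simp only [Matrix.mulVec, dotProduct, hH2]
    exact Finset.sum_congr rfl fun _ _ => mul_comm _ _
  rw [LinearMap.mem_ker, Matrix.mulVecLin_apply, funext_iff, Sum.forall]
  simp only [e1, e2, Pi.zero_apply]
  exact and_congr Iff.rfl ⟨fun h e he => h ⟨e, he⟩, fun h e => h e e.2⟩

theorem aux_rank {K L : Type*} [Field K] [Fintype K] [Field L] [Algebra K L]
    {l r s : ℕ} (hs : s + 2 ≤ l * r)
    (α : Fin l → Fin (r + 1) → L)
    (hind : LinearIndependent K
      (fun p : Fin l × Fin r => α p.1 p.2.castSucc - α p.1 (Fin.last r)))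
    (H : Matrix (Fin l ⊕ Fin (s + 1)) (Fin l × Fin (r + 1)) L)
    (hH1 : ∀ (i' : Fin l) (p : Fin l × Fin (r + 1)),
      H (Sum.inl i') p = if p.1 = i' then 1 else 0)
    (hH2 : ∀ (e : Fin (s + 1)) (p : Fin l × Fin (r + 1)),
      H (Sum.inr e) p = α p.1 p.2 ^ Fintype.card K ^ (e : ℕ)) :
    H.rank = l + (s + 1) := by
  have hrow : LinearIndependent L H.row := by
    rw [Fintype.linearIndependent_iff]
    intro g hg
    have hp : ∀ i j, g (Sum.inl i)
        + ∑ e : Fin (s + 1), g (Sum.inr e) * α i j ^ Fintype.card K ^ (e : ℕ) = 0 := by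
      intro i j
      have := congrFun hg (i, j)
      simpa [Finset.sum_apply, Matrix.row, hH1, hH2] using this
    have h0 := aux_moore _ hind (s + 1) (by simp; omega) (fun e => g (Sum.inr e)) (by
      rintro ⟨i, j⟩
      have h := congrArg₂ (· - ·) (hp i j.castSucc) (hp i (Fin.last r))
      simp only [add_sub_add_left_eq_sub, sub_zero] at h
      rw [← Finset.sum_sub_distrib] at h
      rw [← h]
      refine Finset.sum_congr rfl fun e _ => ?_
      obtain ⟨f, hf⟩ := aux_frob K L (e : ℕ)
      simp only [← hf, map_sub, mul_sub])
    have h0 : ∀ e, g (Sum.inr e) = 0 := fun e => congrFun h0 e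
    rintro (i | e)
    · simpa [h0] using hp i 0
    · exact h0 e
  have := hrow.rank_matrix
  simpa using this

/-- Construction 1 is optimal: the code `{x : Hx = 0}` has dimension `k`, all symbol
locality `r`, and minimum distance exactly `n - k - ⌈k/r⌉ + 2` (meeting the
Singleton-like bound). -/
theorem stmt_14 {K L : Type*} [Field K] [Fintype K] [Field L] [Fintype L] [Algebra K L]
    [DecidableEq L]
    {l r s n k : ℕ} (hl : 1 ≤ l) (hr : 1 ≤ r)
    (hn : n = l * (r + 1)) (hk : k + (l + s + 1) = n) (hk1 : 1 ≤ k)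
    (α : Fin l → Fin (r + 1) → L)
    (hind : LinearIndependent K
      (fun p : Fin l × Fin r => α p.1 p.2.castSucc - α p.1 (Fin.last r)))
    (H : Matrix (Fin l ⊕ Fin (s + 1)) (Fin l × Fin (r + 1)) L)
    (hH1 : ∀ (i' : Fin l) (p : Fin l × Fin (r + 1)),
      H (Sum.inl i') p = if p.1 = i' then 1 else 0)
    (hH2 : ∀ (e : Fin (s + 1)) (p : Fin l × Fin (r + 1)),
      H (Sum.inr e) p = α p.1 p.2 ^ Fintype.card K ^ (e : ℕ)) :
    Module.finrank L (LinearMap.ker H.mulVecLin) = k ∧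
    (∀ p : Fin l × Fin (r + 1), HasLocality (LinearMap.ker H.mulVecLin) p r) ∧
    (minDist (LinearMap.ker H.mulVecLin) : ℤ) = (n : ℤ) - k - ⌈(k : ℚ) / r⌉ + 2 := by
  have hs : s + 2 ≤ l * r := by
    have : l * (r + 1) = l * r + l := by ring
    omega
  have hkk : k + (s + 1) = l * r := by
    have : l * (r + 1) = l * r + l := by ring
    omega
  have hmem := aux_ker (K := K) α H hH1 hH2
  refine ⟨?_, ?_, ?_⟩
  · have h1 := LinearMap.finrank_range_add_finrank_ker H.mulVecLin
    have h2 := aux_rank hs α hind H hH1 hH2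
    rw [Matrix.rank] at h2
    rw [h2] at h1
    simp only [Module.finrank_fintype_fun_eq_card, Fintype.card_prod, Fintype.card_fin] at h1
    omega
  · rintro ⟨i, j⟩
    refine ⟨(Finset.univ.erase j).image (fun j' => (i, j')), by simp, ?_, ?_⟩
    · exact Finset.card_image_le.trans (by simp)
    · intro c hc c' hc' h
      have h1 := ((hmem c).1 hc).1 i
      have h2 := ((hmem c').1 hc').1 i
      rw [← Finset.add_sum_erase _ _ (Finset.mem_univ j)] at h1 h2
      have h3 : ∑ x ∈ Finset.univ.erase j, c (i, x) = ∑ x ∈ Finset.univ.erase j, c' (i, x) :=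
        Finset.sum_congr rfl fun x hx => h _ (Finset.mem_image_of_mem _ hx)
      rw [h3] at h1
      exact add_right_cancel (h1.trans h2.symm)
  · have hmd : minDist (LinearMap.ker H.mulVecLin) = s + 2 + ((s + 1) / r + 1) := by
      obtain ⟨c, hc0, h1, h2, hle⟩ := aux_upper (K := K) hr hs α
      have hge := aux_lower hr α hind c hc0 h1 h2
      have hin : s + 2 + ((s + 1) / r + 1) ∈
          {w | ∃ c ∈ LinearMap.ker H.mulVecLin, c ≠ 0 ∧ hammingNorm c = w} :=
        ⟨c, (hmem c).2 ⟨h1, h2⟩, hc0, le_antisymm hle hge⟩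
      refine le_antisymm (Nat.sInf_le hin) (le_csInf ⟨_, hin⟩ ?_)
      rintro w ⟨c, hc, hc0, rfl⟩
      exact aux_lower hr α hind c hc0 ((hmem c).1 hc).1 ((hmem c).1 hc).2
    have hceil : ⌈(k : ℚ) / r⌉ = (l : ℤ) - ((s + 1) / r : ℕ) := by
      set d := (s + 1) / r with hd
      have d1 : d * r ≤ s + 1 := Nat.div_mul_le_self _ _
      have d2 : s + 1 < (d + 1) * r := (Nat.div_lt_iff_lt_mul (by omega)).1 (by omega)
      have hr0 : (0 : ℚ) < r := by exact_mod_cast hr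
      have d1' : (d : ℚ) * r ≤ s + 1 := by exact_mod_cast d1
      have d2' : (s : ℚ) + 1 < (d + 1) * r := by exact_mod_cast d2
      have hk' : (k : ℚ) + (s + 1) = l * r := by exact_mod_cast hkk
      rw [Int.ceil_eq_iff]
      push_cast
      rw [lt_div_iff₀ hr0, div_le_iff₀ hr0]
      constructor <;> nlinarith
    rw [hmd, hceil]
    have : (n : ℤ) = k + (l + s + 1) := by exact_mod_cast hk.symm
    rw [this]
    push_cast
    ring
end
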